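/- arXiv:2307.06210 — 7 statements merged into one kernel-verified Lean document; each statement's English description precedes it below -/
import Mathlib

section
/- Let (x*, y*, μ*, z*) be an optimal solution to LP(P, C, 0), the linear program instantiated with the true distributions ζ_b = P(·,·|b), the true cost differences Λ_i = C_i, and ε = 0. Define γ*_i[b,s,θ] = x*_i[b,s,θ]/μ*[b] if μ*[b] ≠ 0 and γ*_i[b,s,θ] = 0 otherwise, and π*[b,s,a] = y*[b,s,a]/μ*[b] if μ*[b] ≠ 0 and π*[b,s,a] = 1/d otherwise. Then (μ*, γ*, π*) is an incentive compatible correlated mechanism and U(μ*,γ*,π*) ≥ U(μ,γ,π) for every incentive compatible correlated mechanism (μ,γ,π). -/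
open Finset

noncomputable section

variable {n : ℕ} {B S : Fin n → Type*} {Θ A : Type*}

/-- Expected payment of agent `i` under truthful behavior. -/
def Fpay [∀ i, Fintype (B i)] [∀ i, Fintype (S i)] [Fintype Θ]
    (P : (∀ i, B i) → (∀ i, S i) → Θ → ℝ) (μ : (∀ i, B i) → ℝ)
    (γ : Fin n → (∀ i, B i) → (∀ i, S i) → Θ → ℝ) (i : Fin n) : ℝ :=
  ∑ b, ∑ s, ∑ θ, μ b * P b s θ * γ i b s θ

/-- Expected payment of agent `i` deviating via `(φ, ψ)` while the others are truthful. -/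
def FpayDev [∀ i, Fintype (B i)] [∀ i, Fintype (S i)] [Fintype Θ]
    (P : (∀ i, B i) → (∀ i, S i) → Θ → ℝ) (μ : (∀ i, B i) → ℝ)
    (γ : Fin n → (∀ i, B i) → (∀ i, S i) → Θ → ℝ) (i : Fin n)
    (φ : B i → B i) (ψ : B i → S i → S i) : ℝ :=
  ∑ b, ∑ s, ∑ θ, μ b * P (Function.update b i (φ (b i))) s θ *
      γ i b (Function.update s i (ψ (b i) (s i))) θ

/-- Incentive compatibility of a correlated mechanism. -/
def IC [∀ i, Fintype (B i)] [∀ i, Fintype (S i)] [Fintype Θ]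
    (c : ∀ i, B i → ℝ) (P : (∀ i, B i) → (∀ i, S i) → Θ → ℝ)
    (μ : (∀ i, B i) → ℝ)
    (γ : Fin n → (∀ i, B i) → (∀ i, S i) → Θ → ℝ) : Prop :=
  ∀ (i : Fin n) (φ : B i → B i) (ψ : B i → S i → S i),
    Fpay P μ γ i - FpayDev P μ γ i φ ψ ≥ ∑ b, μ b * (c i (b i) - c i (φ (b i)))

/-- Principal's expected utility of a correlated mechanism. -/
def Util [∀ i, Fintype (B i)] [∀ i, Fintype (S i)] [Fintype Θ] [Fintype A]
    (P : (∀ i, B i) → (∀ i, S i) → Θ → ℝ) (u : A → Θ → ℝ)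
    (μ : (∀ i, B i) → ℝ)
    (γ : Fin n → (∀ i, B i) → (∀ i, S i) → Θ → ℝ)
    (π : (∀ i, B i) → (∀ i, S i) → A → ℝ) : ℝ :=
  (∑ b, ∑ s, ∑ θ, μ b * P b s θ * ∑ a, π b s a * u a θ) - ∑ i, Fpay P μ γ i

/-- Validity of a correlated mechanism (distributions and payment bounds). -/
def IsMech [∀ i, Fintype (B i)] [Fintype A] (M : ℝ)
    (μ : (∀ i, B i) → ℝ)
    (γ : Fin n → (∀ i, B i) → (∀ i, S i) → Θ → ℝ)
    (π : (∀ i, B i) → (∀ i, S i) → A → ℝ) : Prop :=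
  (∀ b, 0 ≤ μ b) ∧ (∑ b, μ b) = 1 ∧
  (∀ i b s θ, γ i b s θ ∈ Set.Icc (0:ℝ) M) ∧
  (∀ b s a, 0 ≤ π b s a) ∧ (∀ b s, ∑ a, π b s a = 1)

/-- `f_i(x_i | b_i, b'_i, s_i, s'_i, ζ)`. -/
def fLP [∀ i, Fintype (B i)] [∀ i, DecidableEq (B i)]
    [∀ i, Fintype (S i)] [∀ i, DecidableEq (S i)] [Fintype Θ]
    (i : Fin n) (x : (∀ j, B j) → (∀ j, S j) → Θ → ℝ)
    (bi bi' : B i) (si si' : S i)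
    (ζ : (∀ j, B j) → (∀ j, S j) → Θ → ℝ) : ℝ :=
  ∑ b, ∑ s, ∑ θ,
    if b i = bi' ∧ s i = si then
      x (Function.update b i bi) (Function.update s i si') θ * ζ b s θ
    else 0

/-- Feasibility for `LP(ζ, Λ, ε)`. -/
def LPfeasible [∀ i, Fintype (B i)] [∀ i, DecidableEq (B i)]
    [∀ i, Fintype (S i)] [∀ i, DecidableEq (S i)] [Fintype Θ] [Fintype A]
    (M : ℝ)
    (ζ : (∀ j, B j) → (∀ j, S j) → Θ → ℝ)
    (Λ : ∀ i, B i → B i → ℝ) (ε : ℝ)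
    (x : Fin n → (∀ j, B j) → (∀ j, S j) → Θ → ℝ)
    (y : (∀ j, B j) → (∀ j, S j) → A → ℝ)
    (z : ∀ i, B i → B i → S i → ℝ)
    (μ : (∀ j, B j) → ℝ) : Prop :=
  (∀ i b s θ, 0 ≤ x i b s θ) ∧
  (∀ b s a, 0 ≤ y b s a) ∧
  (∀ i (bi bi' : B i) si, 0 ≤ z i bi bi' si) ∧
  (∀ b, 0 ≤ μ b) ∧ (∑ b, μ b) = 1 ∧
  (∀ (i : Fin n) (bi bi' : B i),
    (∑ si, (fLP i (x i) bi bi si si ζ - z i bi bi' si)) ≥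
      (∑ b, if b i = bi then μ b * Λ i bi bi' else 0) - ε) ∧
  (∀ (i : Fin n) (bi bi' : B i) (si si' : S i),
    z i bi bi' si ≥ fLP i (x i) bi bi' si si' ζ) ∧
  (∀ b s, (∑ a, y b s a) = μ b) ∧
  (∀ i b s θ, x i b s θ ≤ M * μ b)

/-- Objective of `LP(ζ, Λ, ε)`. -/
def LPobj [∀ i, Fintype (B i)] [∀ i, Fintype (S i)] [Fintype Θ] [Fintype A]
    (u : A → Θ → ℝ)
    (ζ : (∀ j, B j) → (∀ j, S j) → Θ → ℝ)
    (x : Fin n → (∀ j, B j) → (∀ j, S j) → Θ → ℝ)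
    (y : (∀ j, B j) → (∀ j, S j) → A → ℝ) : ℝ :=
  ∑ b, ∑ s, ∑ θ,
    ((∑ a, y b s a * ζ b s θ * u a θ) - ∑ i, x i b s θ * ζ b s θ)

/-!
Incentive compatibility decouples over the recommendations: since a deviation `(φ, ψ)` may be
chosen separately at each recommended action, and truth-telling costs nothing elsewhere, it
holds iff no single recommendation `bi` admits a profitable pair of an action `bi'` and a misreport
`g : S i → S i`. For fixed `bi` and `bi'` the payment from misreporting through `g` is
`∑ si, f_i(bi, bi', si, g si)`, so its maximum over `g` is `∑ si, max_{si'} f_i(bi, bi', si, si')`,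
and the variables `z` of the linear program are upper bounds of these inner maxima. In the
unconditional variables `x = μ γ`, `y = μ π` the program therefore optimizes exactly over incentive
compatible mechanisms. Dividing by `μ` loses nothing, because `x` and `y` vanish where `μ` does.
-/

section FiniteSums

theorem sum_filter_update_comm {ι R : Type*} {α : ι → Type*} [DecidableEq ι]
    [Fintype (∀ j, α j)] [AddCommMonoid R] (i : ι) [DecidableEq (α i)] (a a' : α i)
    (g : (∀ j, α j) → (∀ j, α j) → R) :
    ∑ b with b i = a', g b (Function.update b i a) =
      ∑ b with b i = a, g (Function.update b i a') b := by
  have update_update {b : ∀ j, α j} {a₁ : α i} (a₂ : α i) (hb : b i = a₁) :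
      Function.update (Function.update b i a₂) i a₁ = b := by
    subst hb; simp
  refine sum_nbij' (Function.update · i a) (Function.update · i a')
    (by simp) (by simp) ?_ ?_ ?_ <;> intro b hb <;> rw [mem_filter_univ] at hb
  · exact update_update a hb
  · exact update_update a' hb
  · rw [update_update a hb]

theorem forall_sum_nonneg_iff {ι R : Type*} {κ : ι → Type*} [Fintype ι] [AddCommMonoid R]
    [Preorder R] [AddLeftMono R] {F : ∀ j, κ j → R} (d : ∀ j, κ j) (hd : ∀ j, F j (d j) = 0) :
    (∀ g : ∀ j, κ j, 0 ≤ ∑ j, F j (g j)) ↔ ∀ j k, 0 ≤ F j k := by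
  classical
  refine ⟨fun h j k ↦ ?_, fun h g ↦ sum_nonneg fun j _ ↦ h j (g j)⟩
  have sum_eq : ∑ j', F j' (Function.update d j k j') = F j k := by
    rw [Fintype.sum_eq_single j fun j' hj' ↦ by rw [Function.update_of_ne hj', hd],
      Function.update_self]
  exact sum_eq ▸ h (Function.update d j k)

theorem exists_upper_bounds_sum_le_iff {ι R : Type*} {κ : ι → Type*} [Fintype ι]
    [∀ s, Finite (κ s)] [hκ : ∀ s, Nonempty (κ s)] [AddCommMonoid R] [LinearOrder R]
    [AddLeftMono R]
    (f : ∀ s, κ s → R) (r : R) :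
    (∃ z : ι → R, ∑ s, z s ≤ r ∧ ∀ s t, f s t ≤ z s) ↔
      ∀ g : ∀ s, κ s, ∑ s, f s (g s) ≤ r := by
  constructor
  · rintro ⟨z, hz, hfz⟩ g
    exact (sum_le_sum fun s _ ↦ hfz s (g s)).trans hz
  · intro h
    choose t ht using fun s ↦ Finite.exists_max (f s)
    exact ⟨fun s ↦ f s (t s), h t, ht⟩

end FiniteSums

theorem mul_ite_div_eq {K : Type*} [CommGroupWithZero K] [DecidableEq K] {w v : K} (d : K)
    (h : w = 0 → v = 0) : w * (if w = 0 then d else v / w) = v := by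
  split_ifs with hw
  · rw [hw, zero_mul, h hw]
  · exact mul_div_cancel₀ v hw

/-- The payment rule `γ_i[b,s,θ] = x_i[b,s,θ] / μ[b]` recovered from LP variables, set to `0` off
the support of `μ`. -/
def lpPayment (μ : (∀ j, B j) → ℝ) (x : Fin n → (∀ j, B j) → (∀ j, S j) → Θ → ℝ) :
    Fin n → (∀ j, B j) → (∀ j, S j) → Θ → ℝ :=
  fun i b s θ ↦ if μ b = 0 then 0 else x i b s θ / μ b

/-- The decision rule `π[b,s,a] = y[b,s,a] / μ[b]` recovered from LP variables, set to the uniform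
distribution on actions off the support of `μ`. -/
def lpDecision [Fintype A] (μ : (∀ j, B j) → ℝ) (y : (∀ j, B j) → (∀ j, S j) → A → ℝ) :
    (∀ j, B j) → (∀ j, S j) → A → ℝ :=
  fun b s a ↦ if μ b = 0 then 1 / (Fintype.card A) else y b s a / μ b

section Objective

variable [∀ i, Fintype (B i)] [∀ i, Fintype (S i)] [Fintype Θ] [Fintype A]

theorem LPobj_mul_eq_Util (P : (∀ i, B i) → (∀ i, S i) → Θ → ℝ) (u : A → Θ → ℝ)
    (μ : (∀ i, B i) → ℝ) (γ : Fin n → (∀ i, B i) → (∀ i, S i) → Θ → ℝ)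
    (π : (∀ i, B i) → (∀ i, S i) → A → ℝ) :
    LPobj u P (fun i b s θ ↦ μ b * γ i b s θ) (fun b s a ↦ μ b * π b s a) = Util P u μ γ π := by
  have payments : ∑ i, Fpay P μ γ i = ∑ b, ∑ s, ∑ θ, ∑ i, μ b * γ i b s θ * P b s θ := by
    simp only [Fpay, sum_comm (s := (univ : Finset (Fin n))), mul_right_comm]
  have benefit (b s θ) : μ b * P b s θ * ∑ a, π b s a * u a θ =
      ∑ a, μ b * π b s a * P b s θ * u a θ := by
    rw [mul_sum]
    exact sum_congr rfl fun a _ ↦ by ring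
  simp only [LPobj, Util, payments, benefit, sum_sub_distrib]

end Objective

section Interim

variable [∀ i, Fintype (B i)] [∀ i, DecidableEq (B i)] [∀ i, Fintype (S i)] [Fintype Θ]

/-- The part of agent `i`'s expected payment that accrues when `bi` is recommended, if she then
plays `bi'` and misreports her signal through `g`. Here `x` is the payment rule already weighted
by the probability of the recommendation, so nothing is normalized by the probability of `bi`. -/
def interimPay (ζ : (∀ j, B j) → (∀ j, S j) → Θ → ℝ) (i : Fin n)
    (x : (∀ j, B j) → (∀ j, S j) → Θ → ℝ) (bi bi' : B i) (g : S i → S i) : ℝ :=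
  ∑ b with b i = bi, ∑ s, ∑ θ,
    x b (Function.update s i (g (s i))) θ * ζ (Function.update b i bi') s θ

theorem FpayDev_eq_sum_interimPay (P : (∀ i, B i) → (∀ i, S i) → Θ → ℝ)
    (μ : (∀ i, B i) → ℝ) (γ : Fin n → (∀ i, B i) → (∀ i, S i) → Θ → ℝ) (i : Fin n)
    (φ : B i → B i) (ψ : B i → S i → S i) :
    FpayDev P μ γ i φ ψ =
      ∑ bi, interimPay P i (fun b s θ ↦ μ b * γ i b s θ) bi (φ bi) (ψ bi) := by
  rw [FpayDev, ← sum_fiberwise univ (fun b ↦ b i)]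
  refine sum_congr rfl fun bi _ ↦ sum_congr rfl fun b hb ↦ ?_
  simp only [(mem_filter_univ b).mp hb, mul_right_comm]

theorem Fpay_eq_sum_interimPay (P : (∀ i, B i) → (∀ i, S i) → Θ → ℝ)
    (μ : (∀ i, B i) → ℝ) (γ : Fin n → (∀ i, B i) → (∀ i, S i) → Θ → ℝ) (i : Fin n) :
    Fpay P μ γ i = ∑ bi, interimPay P i (fun b s θ ↦ μ b * γ i b s θ) bi bi id := by
  have truthful : Fpay P μ γ i = FpayDev P μ γ i id fun _ ↦ id := by simp [Fpay, FpayDev]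
  exact truthful.trans (FpayDev_eq_sum_interimPay ..)

theorem IC_iff_forall_interimPay (c : ∀ i, B i → ℝ) (P : (∀ i, B i) → (∀ i, S i) → Θ → ℝ)
    (μ : (∀ i, B i) → ℝ) (γ : Fin n → (∀ i, B i) → (∀ i, S i) → Θ → ℝ) :
    IC c P μ γ ↔ ∀ (i : Fin n) (bi bi' : B i) (g : S i → S i),
      ∑ b with b i = bi, μ b * (c i bi - c i bi') ≤
        interimPay P i (fun b s θ ↦ μ b * γ i b s θ) bi bi id -
          interimPay P i (fun b s θ ↦ μ b * γ i b s θ) bi bi' g := by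
  refine forall_congr' fun i ↦ ?_
  let pay := interimPay P i fun b s θ ↦ μ b * γ i b s θ
  let loss (bi : B i) (d : B i × (S i → S i)) : ℝ :=
    pay bi bi id - pay bi d.1 d.2 - ∑ b with b i = bi, μ b * (c i bi - c i d.1)
  have sum_cost (φ : B i → B i) : ∑ b, μ b * (c i (b i) - c i (φ (b i))) =
      ∑ bi, ∑ b with b i = bi, μ b * (c i bi - c i (φ bi)) := by
    rw [← sum_fiberwise univ (fun b ↦ b i)]
    refine sum_congr rfl fun bi _ ↦ sum_congr rfl fun b hb ↦ ?_
    rw [(mem_filter_univ b).mp hb]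
  have sum_loss (φ : B i → B i) (ψ : B i → S i → S i) : ∑ bi, loss bi (φ bi, ψ bi) =
      Fpay P μ γ i - FpayDev P μ γ i φ ψ - ∑ b, μ b * (c i (b i) - c i (φ (b i))) := by
    rw [Fpay_eq_sum_interimPay, FpayDev_eq_sum_interimPay, sum_cost]
    simp only [loss, pay, sum_sub_distrib]
  have decoupled : (∀ g : B i → B i × (S i → S i), 0 ≤ ∑ bi, loss bi (g bi)) ↔
      ∀ bi d, 0 ≤ loss bi d :=
    forall_sum_nonneg_iff (fun bi ↦ (bi, id)) fun bi ↦ by simp [loss]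
  constructor
  · intro h bi bi' g
    refine sub_nonneg.mp (decoupled.mp (fun d ↦ ?_) bi (bi', g))
    exact (sum_loss (Prod.fst ∘ d) (Prod.snd ∘ d)).symm ▸ sub_nonneg.mpr (h _ _)
  · intro h φ ψ
    rw [ge_iff_le, ← sub_nonneg, ← sum_loss]
    exact decoupled.mpr (fun bi d ↦ sub_nonneg.mpr (h bi d.1 d.2)) fun bi ↦ (φ bi, ψ bi)

end Interim

section LinearProgram

variable [∀ i, Fintype (B i)] [∀ i, DecidableEq (B i)] [∀ i, Fintype (S i)]
  [∀ i, DecidableEq (S i)] [Fintype Θ]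

theorem sum_fLP_eq_interimPay (ζ : (∀ j, B j) → (∀ j, S j) → Θ → ℝ) (i : Fin n)
    (x : (∀ j, B j) → (∀ j, S j) → Θ → ℝ) (bi bi' : B i) (g : S i → S i) :
    ∑ si, fLP i x bi bi' si (g si) ζ = interimPay ζ i x bi bi' g := by
  calc ∑ si, fLP i x bi bi' si (g si) ζ
      = ∑ b, if b i = bi' then ∑ s, ∑ θ,
          x (Function.update b i bi) (Function.update s i (g (s i))) θ * ζ b s θ else 0 := by
        simp only [fLP, sum_comm (s := (univ : Finset (S i))), ite_and, sum_ite_irrel,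
          sum_const_zero, sum_ite_eq, mem_univ, if_true]
    _ = ∑ b with b i = bi', ∑ s, ∑ θ,
          x (Function.update b i bi) (Function.update s i (g (s i))) θ * ζ b s θ :=
        (sum_filter ..).symm
    _ = interimPay ζ i x bi bi' g :=
        sum_filter_update_comm i bi bi' fun b b' ↦ ∑ s, ∑ θ,
          x b' (Function.update s i (g (s i))) θ * ζ b s θ

theorem fLP_nonneg {ζ : (∀ j, B j) → (∀ j, S j) → Θ → ℝ} {i : Fin n}
    {x : (∀ j, B j) → (∀ j, S j) → Θ → ℝ} (hx : ∀ b s θ, 0 ≤ x b s θ)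
    (hζ : ∀ b s θ, 0 ≤ ζ b s θ) (bi bi' : B i) (si si' : S i) :
    0 ≤ fLP i x bi bi' si si' ζ := by
  refine sum_nonneg fun b _ ↦ sum_nonneg fun s _ ↦ sum_nonneg fun θ _ ↦ ?_
  split_ifs
  · exact mul_nonneg (hx _ _ _) (hζ _ _ _)
  · exact le_rfl

theorem exists_lp_bounds_iff_forall_interimPay (ζ : (∀ j, B j) → (∀ j, S j) → Θ → ℝ) (i : Fin n)
    (x : (∀ j, B j) → (∀ j, S j) → Θ → ℝ) (bi bi' : B i) (r : ℝ) :
    (∃ z : S i → ℝ, ∑ si, (fLP i x bi bi si si ζ - z si) ≥ r ∧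
        ∀ si si', z si ≥ fLP i x bi bi' si si' ζ) ↔
      ∀ g, r ≤ interimPay ζ i x bi bi id - interimPay ζ i x bi bi' g := by
  have truthful : ∑ si, fLP i x bi bi si si ζ = interimPay ζ i x bi bi id :=
    sum_fLP_eq_interimPay ζ i x bi bi id
  have bounds := exists_upper_bounds_sum_le_iff (hκ := fun si ↦ ⟨si⟩)
    (fun si si' ↦ fLP i x bi bi' si si' ζ) (interimPay ζ i x bi bi id - r)
  simpa only [sum_sub_distrib, truthful, sum_fLP_eq_interimPay, ge_iff_le, le_sub_comm (a := r)]
    using bounds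

theorem IC_iff_exists_lp_bounds (c : ∀ i, B i → ℝ) (P : (∀ i, B i) → (∀ i, S i) → Θ → ℝ)
    (μ : (∀ i, B i) → ℝ) (γ : Fin n → (∀ i, B i) → (∀ i, S i) → Θ → ℝ) :
    IC c P μ γ ↔ ∃ z : ∀ i, B i → B i → S i → ℝ, ∀ (i : Fin n) (bi bi' : B i),
      (∑ si, (fLP i (fun b s θ ↦ μ b * γ i b s θ) bi bi si si P - z i bi bi' si) ≥
        ∑ b, if b i = bi then μ b * (c i bi - c i bi') else 0) ∧
      ∀ si si', z i bi bi' si ≥ fLP i (fun b s θ ↦ μ b * γ i b s θ) bi bi' si si' P := by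
  simp only [IC_iff_forall_interimPay, ← exists_lp_bounds_iff_forall_interimPay, sum_filter,
    Classical.skolem]

variable [Fintype A] {M : ℝ} {x : Fin n → (∀ j, B j) → (∀ j, S j) → Θ → ℝ}
  {y : (∀ j, B j) → (∀ j, S j) → A → ℝ} {z : ∀ i, B i → B i → S i → ℝ} {μ : (∀ j, B j) → ℝ}

theorem IsMech.exists_LPfeasible {c : ∀ i, B i → ℝ} {P : (∀ i, B i) → (∀ i, S i) → Θ → ℝ}
    {γ : Fin n → (∀ i, B i) → (∀ i, S i) → Θ → ℝ} {π : (∀ i, B i) → (∀ i, S i) → A → ℝ}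
    (hmech : IsMech M μ γ π) (hP : ∀ b s θ, 0 ≤ P b s θ) (hIC : IC c P μ γ) :
    ∃ z, LPfeasible M P (fun i bi bi' ↦ c i bi - c i bi') 0
      (fun i b s θ ↦ μ b * γ i b s θ) (fun b s a ↦ μ b * π b s a) z μ := by
  obtain ⟨hμ, hμ_sum, hγ, hπ, hπ_sum⟩ := hmech
  obtain ⟨z, hz⟩ := (IC_iff_exists_lp_bounds c P μ γ).mp hIC
  have hx (i b s θ) : 0 ≤ μ b * γ i b s θ := mul_nonneg (hμ b) (hγ i b s θ).1
  have hy (b s a) : 0 ≤ μ b * π b s a := mul_nonneg (hμ b) (hπ b s a)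
  have hz_nonneg (i) (bi bi' : B i) (si) : 0 ≤ z i bi bi' si :=
    (fLP_nonneg (hx i) hP bi bi' si si).trans ((hz i bi bi').2 si si)
  have hy_sum (b s) : ∑ a, μ b * π b s a = μ b := by rw [← mul_sum, hπ_sum, mul_one]
  have hx_le (i b s θ) : μ b * γ i b s θ ≤ M * μ b := by
    rw [mul_comm M]
    exact mul_le_mul_of_nonneg_left (hγ i b s θ).2 (hμ b)
  exact ⟨z, hx, hy, hz_nonneg, hμ, hμ_sum, fun i bi bi' ↦ (sub_zero _).trans_le (hz i bi bi').1,
    fun i bi bi' ↦ (hz i bi bi').2, hy_sum, hx_le⟩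

section Feasible

variable {ζ : (∀ j, B j) → (∀ j, S j) → Θ → ℝ} {Λ : ∀ i, B i → B i → ℝ} {ε : ℝ}

theorem LPfeasible.mul_lpPayment (h : LPfeasible M ζ Λ ε x y z μ) :
    (fun i b s θ ↦ μ b * lpPayment μ x i b s θ) = x := by
  obtain ⟨hx, -, -, -, -, -, -, -, hx_le⟩ := h
  funext i b s θ
  refine mul_ite_div_eq 0 fun hμb ↦ (hx i b s θ).antisymm' ?_
  simpa only [hμb, mul_zero] using hx_le i b s θ

theorem LPfeasible.mul_lpDecision (h : LPfeasible M ζ Λ ε x y z μ) :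
    (fun b s a ↦ μ b * lpDecision μ y b s a) = y := by
  obtain ⟨-, hy, -, -, -, -, -, hy_sum, -⟩ := h
  funext b s a
  refine mul_ite_div_eq _ fun hμb ↦ ?_
  exact (sum_eq_zero_iff_of_nonneg fun a _ ↦ hy b s a).mp ((hy_sum b s).trans hμb) a (mem_univ a)

theorem LPfeasible.isMech [Nonempty A] (h : LPfeasible M ζ Λ ε x y z μ) (hM : 0 ≤ M) :
    IsMech M μ (lpPayment μ x) (lpDecision μ y) := by
  obtain ⟨hx, hy, -, hμ, hμ_sum, -, -, hy_sum, hx_le⟩ := h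
  refine ⟨hμ, hμ_sum, fun i b s θ ↦ ?_, fun b s a ↦ ?_, fun b s ↦ ?_⟩
  · unfold lpPayment
    split_ifs
    · exact Set.left_mem_Icc.mpr hM
    · exact ⟨div_nonneg (hx i b s θ) (hμ b), div_le_of_le_mul₀ (hμ b) hM (hx_le i b s θ)⟩
  · unfold lpDecision
    split_ifs
    · positivity
    · exact div_nonneg (hy b s a) (hμ b)
  · unfold lpDecision
    split_ifs with hμb
    · simp
    · rw [← sum_div, hy_sum, div_self hμb]

theorem LPfeasible.ic {c : ∀ i, B i → ℝ}
    (h : LPfeasible M ζ (fun i bi bi' ↦ c i bi - c i bi') 0 x y z μ) :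
    IC c ζ μ (lpPayment μ x) := by
  rw [← h.mul_lpPayment] at h
  obtain ⟨-, -, -, -, -, hgain, hbound, -, -⟩ := h
  refine (IC_iff_exists_lp_bounds c ζ μ _).mpr ⟨z, fun i bi bi' ↦ ⟨?_, hbound i bi bi'⟩⟩
  simpa only [sub_zero] using hgain i bi bi'

theorem LPfeasible.LPobj_eq_Util (h : LPfeasible M ζ Λ ε x y z μ) (u : A → Θ → ℝ) :
    LPobj u ζ x y = Util ζ u μ (lpPayment μ x) (lpDecision μ y) := by
  rw [← LPobj_mul_eq_Util, h.mul_lpPayment, h.mul_lpDecision]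

end Feasible

theorem optimal_mechanism_from_LP_general [Nonempty A] {c : ∀ i, B i → ℝ}
    {P : (∀ i, B i) → (∀ i, S i) → Θ → ℝ} {u : A → Θ → ℝ} (hM : 0 ≤ M)
    (hP : ∀ b s θ, 0 ≤ P b s θ)
    (hfeas : LPfeasible M P (fun i bi bi' ↦ c i bi - c i bi') 0 x y z μ)
    (hopt : ∀ x' y' z' μ', LPfeasible M P (fun i bi bi' ↦ c i bi - c i bi') 0 x' y' z' μ' →
      LPobj u P x' y' ≤ LPobj u P x y) :
    IsMech M μ (lpPayment μ x) (lpDecision μ y) ∧ IC c P μ (lpPayment μ x) ∧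
      ∀ μ' γ' π', IsMech M μ' γ' π' → IC c P μ' γ' →
        Util P u μ' γ' π' ≤ Util P u μ (lpPayment μ x) (lpDecision μ y) := by
  refine ⟨hfeas.isMech hM, hfeas.ic, fun μ' γ' π' hmech hIC ↦ ?_⟩
  obtain ⟨z', hfeas'⟩ := hmech.exists_LPfeasible hP hIC
  rw [← LPobj_mul_eq_Util, ← hfeas.LPobj_eq_Util]
  exact hopt _ _ _ _ hfeas'

end LinearProgram

/-- from an optimal solution of `LP(P, C, 0)` one recovers an optimal
incentive compatible correlated mechanism. -/
theorem optimal_mechanism_from_LP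
    [∀ i, Fintype (B i)] [∀ i, DecidableEq (B i)]
    [∀ i, Fintype (S i)] [∀ i, DecidableEq (S i)]
    [Fintype Θ] [Fintype A] [Nonempty A]
    (p : Θ → ℝ) (c : ∀ i, B i → ℝ)
    (P : (∀ i, B i) → (∀ i, S i) → Θ → ℝ)
    (u : A → Θ → ℝ) (M : ℝ) (hM : 0 < M)
    (hc : ∀ i bi, c i bi ∈ Set.Icc (0:ℝ) 1)
    (hu : ∀ a θ, u a θ ∈ Set.Icc (0:ℝ) 1)
    (hp0 : ∀ θ, 0 ≤ p θ) (hp1 : (∑ θ, p θ) = 1)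
    (hP0 : ∀ b s θ, 0 ≤ P b s θ)
    (hPp : ∀ b θ, (∑ s, P b s θ) = p θ)
    (hmarg : ∀ (i : Fin n) (b b' : ∀ j, B j), b i = b' i →
      ∀ (si : S i) (θ : Θ),
        (∑ s, if s i = si then P b s θ else 0) =
        (∑ s, if s i = si then P b' s θ else 0))
    (xs : Fin n → (∀ j, B j) → (∀ j, S j) → Θ → ℝ)
    (ys : (∀ j, B j) → (∀ j, S j) → A → ℝ)
    (zs : ∀ i, B i → B i → S i → ℝ)
    (μs : (∀ j, B j) → ℝ)
    (hfeas : LPfeasible M P (fun i bi bi' => c i bi - c i bi') 0 xs ys zs μs)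
    (hopt : ∀ x y z μ,
      LPfeasible M P (fun i bi bi' => c i bi - c i bi') 0 x y z μ →
      LPobj u P x y ≤ LPobj u P xs ys)
    (γs : Fin n → (∀ j, B j) → (∀ j, S j) → Θ → ℝ)
    (πs : (∀ j, B j) → (∀ j, S j) → A → ℝ)
    (hγ : ∀ i b s θ, γs i b s θ = if μs b = 0 then 0 else xs i b s θ / μs b)
    (hπ : ∀ b s a, πs b s a =
      if μs b = 0 then (1 : ℝ) / (Fintype.card A) else ys b s a / μs b) :
    IsMech M μs γs πs ∧ IC c P μs γs ∧
      ∀ μ γ π, IsMech M μ γ π → IC c P μ γ →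
        Util P u μ γ π ≤ Util P u μs γs πs := by
  obtain rfl : γs = lpPayment μs xs := by funext i b s θ; exact hγ i b s θ
  obtain rfl : πs = lpDecision μs ys := by funext b s a; exact hπ b s a
  exact optimal_mechanism_from_LP_general hM.le hP0 hfeas hopt
end
end

section
/- Let (γ, π) be an uncorrelated mechanism and, for each agent i, let (b_i, φ_i) be a best response of agent i to γ_i. Define γ'_i[s,θ] := γ_i[φ_i(s),θ] for all s ∈ S_i, θ ∈ Θ, and π'[s,a] := π[(φ_1(s_1),…,φ_n(s_n)),a] for all s ∈ S, a ∈ A. Then for each agent i the pair (b_i, identity reporting) is a best response of agent i to γ'_i, and Σ_{s,θ} P(s,θ|b)·[Σ_a π'[s,a]·u(a,θ) − Σ_i γ'_i[s_i,θ]] = Σ_{s,θ} P(s,θ|b)·[Σ_a π[(φ_1(s_1),…,φ_n(s_n)),a]·u(a,θ) − Σ_i γ_i[φ_i(s_i),θ]], where b = (b_1,…,b_n). -/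
open Finset

noncomputable section

variable {n : ℕ} {B S : Fin n → Type*} {Θ A : Type*}

/-- `(bi, φ)` is a best response of agent `i` to the uncorrelated scoring rule `γ`,
where `Pm i` is the joint distribution `P^{(i)}(s_i, θ | b_i)` of agent `i`'s signal
and the state. -/
def IsBR [∀ i, Fintype (S i)] [Fintype Θ]
    (Pm : ∀ i, B i → S i → Θ → ℝ) (c : ∀ i, B i → ℝ) (i : Fin n)
    (γ : S i → Θ → ℝ) (bi : B i) (φ : S i → S i) : Prop :=
  ∀ (bi' : B i) (φ' : S i → S i),
    (∑ s, ∑ θ, Pm i bi s θ * γ (φ s) θ) - c i bi ≥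
    (∑ s, ∑ θ, Pm i bi' s θ * γ (φ' s) θ) - c i bi'

theorem IsBR.comp [∀ i, Fintype (S i)] [Fintype Θ]
    {Pm : ∀ i, B i → S i → Θ → ℝ} {c : ∀ i, B i → ℝ} {i : Fin n}
    {γ : S i → Θ → ℝ} {bi : B i} {φ ψ : S i → S i}
    (h : IsBR Pm c i γ bi (φ ∘ ψ)) : IsBR Pm c i (γ ∘ φ) bi ψ :=
  fun bi' ψ' => h bi' (φ ∘ ψ')

/-- Principal's expected utility of the uncorrelated mechanism `(γ, π)` when signals and state have
joint law `Q` and agent `i` sends the message `φ i (s i)` on observing `s i`. The message sets `R i`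
may differ from the signal sets `S i`; truthful reporting is `φ i = id`. -/
def reportUtil {R : Fin n → Type*} [∀ i, Fintype (S i)] [Fintype Θ] [Fintype A]
    (Q : (∀ i, S i) → Θ → ℝ) (u : A → Θ → ℝ)
    (γ : ∀ i, R i → Θ → ℝ) (π : (∀ i, R i) → A → ℝ) (φ : ∀ i, S i → R i) : ℝ :=
  ∑ s, ∑ θ, Q s θ * ((∑ a, π (Pi.map φ s) a * u a θ) - ∑ i, γ i (φ i (s i)) θ)

theorem reportUtil_comp {R T : Fin n → Type*} [∀ i, Fintype (S i)] [Fintype Θ] [Fintype A]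
    (Q : (∀ i, S i) → Θ → ℝ) (u : A → Θ → ℝ)
    (γ : ∀ i, R i → Θ → ℝ) (π : (∀ i, R i) → A → ℝ)
    (φ : ∀ i, T i → R i) (ψ : ∀ i, S i → T i) :
    reportUtil Q u (fun i => γ i ∘ φ i) (π ∘ Pi.map φ) ψ =
      reportUtil Q u γ π (fun i => φ i ∘ ψ i) :=
  rfl

theorem truthful_equivalent_uncorrelated_mechanism_general
    [∀ i, Fintype (S i)] [∀ i, DecidableEq (S i)] [Fintype Θ] [Fintype A]
    (c : ∀ i, B i → ℝ) (P : (∀ i, B i) → (∀ i, S i) → Θ → ℝ)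
    (Pm : ∀ i, B i → S i → Θ → ℝ) (u : A → Θ → ℝ)
    (hPm : ∀ (i : Fin n) (b : ∀ j, B j) (si : S i) (θ : Θ),
      (∑ s, if s i = si then P b s θ else 0) = Pm i (b i) si θ)
    (γ : ∀ i, S i → Θ → ℝ) (π : (∀ i, S i) → A → ℝ)
    (b : ∀ i, B i) (φ : ∀ i, S i → S i)
    (hBR : ∀ i, IsBR Pm c i (γ i) (b i) (φ i)) :
    (∀ i, IsBR Pm c i (γ i ∘ φ i) (b i) id) ∧
      reportUtil (P b) u (fun i => γ i ∘ φ i) (π ∘ Pi.map φ) (fun _ => id) =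
        reportUtil (P b) u γ π φ :=
  ⟨fun i => (hBR i).comp, reportUtil_comp (P b) u γ π φ fun _ => id⟩

/-- any uncorrelated mechanism can be turned into an equivalent one under
which truthful signal reporting is a best response. -/
theorem truthful_equivalent_uncorrelated_mechanism
    [∀ i, Fintype (B i)] [∀ i, DecidableEq (B i)]
    [∀ i, Fintype (S i)] [∀ i, DecidableEq (S i)]
    [Fintype Θ] [Fintype A]
    (p : Θ → ℝ) (c : ∀ i, B i → ℝ)
    (P : (∀ i, B i) → (∀ i, S i) → Θ → ℝ)
    (Pm : ∀ i, B i → S i → Θ → ℝ)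
    (u : A → Θ → ℝ) (M : ℝ) (hM : 0 < M)
    (hc : ∀ i bi, c i bi ∈ Set.Icc (0:ℝ) 1)
    (hu : ∀ a θ, u a θ ∈ Set.Icc (0:ℝ) 1)
    (hp0 : ∀ θ, 0 ≤ p θ) (hp1 : (∑ θ, p θ) = 1)
    (hP0 : ∀ b s θ, 0 ≤ P b s θ)
    (hPp : ∀ b θ, (∑ s, P b s θ) = p θ)
    (hPm : ∀ (i : Fin n) (b : ∀ j, B j) (si : S i) (θ : Θ),
      (∑ s, if s i = si then P b s θ else 0) = Pm i (b i) si θ)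
    (γ : ∀ i, S i → Θ → ℝ) (π : (∀ i, S i) → A → ℝ)
    (hγrange : ∀ i s θ, γ i s θ ∈ Set.Icc (0:ℝ) M)
    (hπ0 : ∀ s a, 0 ≤ π s a) (hπ1 : ∀ s, (∑ a, π s a) = 1)
    (b : ∀ i, B i) (φ : ∀ i, S i → S i)
    (hBR : ∀ i, IsBR Pm c i (γ i) (b i) (φ i))
    (γ2 : ∀ i, S i → Θ → ℝ) (π2 : (∀ i, S i) → A → ℝ)
    (hγ2 : ∀ i s θ, γ2 i s θ = γ i (φ i s) θ)
    (hπ2 : ∀ s a, π2 s a = π (fun j => φ j (s j)) a) :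
    (∀ i, IsBR Pm c i (γ2 i) (b i) id) ∧
    (∑ s, ∑ θ, P b s θ * ((∑ a, π2 s a * u a θ) - ∑ i, γ2 i (s i) θ)) =
      ∑ s, ∑ θ, P b s θ *
        ((∑ a, π (fun j => φ j (s j)) a * u a θ) - ∑ i, γ i (φ i (s i)) θ) := by
  obtain ⟨rfl, rfl⟩ : γ2 = (fun i => γ i ∘ φ i) ∧ π2 = π ∘ Pi.map φ :=
    ⟨funext fun i => funext₂ (hγ2 i), funext₂ hπ2⟩
  exact truthful_equivalent_uncorrelated_mechanism_general c P Pm u hPm γ π b φ hBR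
end
end

section
/- Let γ_i and γ'_i be uncorrelated scoring rules for agent i with ||γ_i − γ'_i||_∞ ≤ η, such that b_i is a best-response action to γ_i and b'_i is a best-response action to γ'_i (each maximizing F°_i(·|b) − c_i(b) over b ∈ B_i). Let V, V' ∈ ℝ satisfy |V − F°_i(γ_i|b_i)| ≤ ε and |V' − F°_i(γ'_i|b'_i)| ≤ ε. Then |(V − V') − C_i(b_i, b'_i)| ≤ 2ε + η. -/
open Finset

noncomputable section

variable {Bi Si Θ : Type*}

instance nonempty_self_maps {α : Type*} : Nonempty (α → α) := ⟨id⟩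

/-- `F°(γ | b)`: maximum expected payment of the agent when she plays `b` and
best-responds in signal reporting, where `P b` is the joint distribution
`P^{(i)}(·,· | b)` over signals and states. -/
def Fo [Fintype Si] [DecidableEq Si] [Fintype Θ]
    (P : Bi → Si → Θ → ℝ) (γ : Si → Θ → ℝ) (b : Bi) : ℝ :=
  Finset.univ.sup' Finset.univ_nonempty
    (fun φ : Si → Si => ∑ s, ∑ θ, P b s θ * γ (φ s) θ)

/-! The optimal value of a maximization problem moves by at most `η` when its objective moves by at
most `η` uniformly. This applies to two nested problems. Over reporting strategies it gives that
`F°(· | b)` is nonexpansive, an expected payment being an average of values of the scoring rule.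
Over actions it then gives that the optimal utilities `F°(γ | b) - c b` and `F°(γ' | b') - c b'`
differ by at most `η`; replacing `F°` by `V` and `V'` costs a further `2 * ε`. -/

theorem abs_sum_mul_sub_sum_mul_le {ι R : Type*} [Ring R] [LinearOrder R]
    [IsStrictOrderedRing R] {s : Finset ι} {w f g : ι → R} {η : R} (hw : ∀ i ∈ s, 0 ≤ w i)
    (hfg : ∀ i ∈ s, |f i - g i| ≤ η) :
    |∑ i ∈ s, w i * f i - ∑ i ∈ s, w i * g i| ≤ (∑ i ∈ s, w i) * η :=
  calc |∑ i ∈ s, w i * f i - ∑ i ∈ s, w i * g i|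
      = |∑ i ∈ s, w i * (f i - g i)| := by simp only [mul_sub, sum_sub_distrib]
    _ ≤ ∑ i ∈ s, |w i * (f i - g i)| := abs_sum_le_sum_abs _ _
    _ ≤ ∑ i ∈ s, w i * η := sum_le_sum fun i hi => by
        rw [abs_mul, abs_of_nonneg (hw i hi)]
        exact mul_le_mul_of_nonneg_left (hfg i hi) (hw i hi)
    _ = (∑ i ∈ s, w i) * η := (sum_mul _ _ _).symm

section Maximum

variable {α G : Type*} [AddCommGroup G] [LinearOrder G] [IsOrderedAddMonoid G]
  {f g : α → G} {η : G}

theorem abs_sub_le_of_isMaxOn {s : Set α} {x y : α} (hx : x ∈ s) (hy : y ∈ s)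
    (hfx : IsMaxOn f s x) (hgy : IsMaxOn g s y) (hfg : ∀ z ∈ s, |f z - g z| ≤ η) :
    |f x - g y| ≤ η := by
  refine abs_sub_le_iff.2 ⟨?_, ?_⟩
  · calc f x - g y ≤ f x - g x := sub_le_sub_left (hgy hx) _
      _ ≤ η := (abs_sub_le_iff.1 (hfg x hx)).1
  · calc g y - f x ≤ g y - f y := sub_le_sub_left (hfx hy) _
      _ ≤ η := (abs_sub_le_iff.1 (hfg y hy)).2

theorem abs_sup'_sub_sup'_le {s : Finset α} (hs : s.Nonempty) (hfg : ∀ z ∈ s, |f z - g z| ≤ η) :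
    |s.sup' hs f - s.sup' hs g| ≤ η := by
  obtain ⟨x, hx, hfx⟩ := exists_mem_eq_sup' hs f
  obtain ⟨y, hy, hgy⟩ := exists_mem_eq_sup' hs g
  have hmax_f : IsMaxOn f s x := fun z hz => (le_sup' f hz).trans_eq hfx
  have hmax_g : IsMaxOn g s y := fun z hz => (le_sup' g hz).trans_eq hgy
  rw [hfx, hgy]
  exact abs_sub_le_of_isMaxOn hx hy hmax_f hmax_g hfg

end Maximum

section ScoringRule

variable [Fintype Si] [Fintype Θ] {P : Bi → Si → Θ → ℝ} {γ γ' : Si → Θ → ℝ} {η : ℝ}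

/-- The expected payment under the scoring rule `γ` of an agent who reports `φ s` on signal `s`,
when `p` is the joint distribution of signals and states; `Fo P γ b` is its maximum over `φ` for
`p = P b`. -/
def expectedPayment (p γ : Si → Θ → ℝ) (φ : Si → Si) : ℝ :=
  ∑ s, ∑ θ, p s θ * γ (φ s) θ

theorem abs_expectedPayment_sub_le {p : Si → Θ → ℝ} (hp0 : ∀ s θ, 0 ≤ p s θ)
    (hp1 : ∑ s, ∑ θ, p s θ = 1) (hη : ∀ s θ, |γ s θ - γ' s θ| ≤ η) (φ : Si → Si) :
    |expectedPayment p γ φ - expectedPayment p γ' φ| ≤ η := by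
  have havg := abs_sum_mul_sub_sum_mul_le (s := univ) (w := fun x : Si × Θ => p x.1 x.2)
    (fun x _ => hp0 x.1 x.2) (fun x _ => hη (φ x.1) x.2)
  simpa only [expectedPayment, Fintype.sum_prod_type, hp1, one_mul] using havg

theorem abs_Fo_sub_Fo_le [DecidableEq Si] {b : Bi} (hP0 : ∀ s θ, 0 ≤ P b s θ)
    (hP1 : ∑ s, ∑ θ, P b s θ = 1) (hη : ∀ s θ, |γ s θ - γ' s θ| ≤ η) :
    |Fo P γ b - Fo P γ' b| ≤ η :=
  abs_sup'_sub_sup'_le univ_nonempty fun φ _ => abs_expectedPayment_sub_le hP0 hP1 hη φ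

theorem abs_optimal_utility_sub_le [DecidableEq Si] {c : Bi → ℝ} {b b' : Bi}
    (hP0 : ∀ a s θ, 0 ≤ P a s θ) (hP1 : ∀ a, ∑ s, ∑ θ, P a s θ = 1)
    (hη : ∀ s θ, |γ s θ - γ' s θ| ≤ η)
    (hBR : ∀ a, Fo P γ a - c a ≤ Fo P γ b - c b)
    (hBR' : ∀ a, Fo P γ' a - c a ≤ Fo P γ' b' - c b') :
    |(Fo P γ b - c b) - (Fo P γ' b' - c b')| ≤ η := by
  refine abs_sub_le_of_isMaxOn (f := fun a => Fo P γ a - c a) (g := fun a => Fo P γ' a - c a)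
    (Set.mem_univ b) (Set.mem_univ b') (fun a _ => hBR a) (fun a _ => hBR' a) fun a _ => ?_
  rw [sub_sub_sub_cancel_right]
  exact abs_Fo_sub_Fo_le (hP0 a) (hP1 a) hη

theorem cost_difference_estimate_general [DecidableEq Si] {c : Bi → ℝ} {b b' : Bi} {V V' ε : ℝ}
    (hP0 : ∀ a s θ, 0 ≤ P a s θ) (hP1 : ∀ a, ∑ s, ∑ θ, P a s θ = 1)
    (hη : ∀ s θ, |γ s θ - γ' s θ| ≤ η)
    (hBR : ∀ a, Fo P γ a - c a ≤ Fo P γ b - c b)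
    (hBR' : ∀ a, Fo P γ' a - c a ≤ Fo P γ' b' - c b')
    (hV : |V - Fo P γ b| ≤ ε) (hV' : |V' - Fo P γ' b'| ≤ ε) :
    |(V - V') - (c b - c b')| ≤ 2 * ε + η := by
  have hopt := abs_optimal_utility_sub_le hP0 hP1 hη hBR hBR'
  rw [abs_sub_comm] at hV'
  calc |(V - V') - (c b - c b')|
      = |(V - Fo P γ b) + ((Fo P γ b - c b) - (Fo P γ' b' - c b')) + (Fo P γ' b' - V')| := by
        ring_nf
    _ ≤ |V - Fo P γ b| + |(Fo P γ b - c b) - (Fo P γ' b' - c b')| + |Fo P γ' b' - V'| :=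
        abs_add_three _ _ _
    _ ≤ ε + η + ε := by gcongr
    _ = 2 * ε + η := by ring

end ScoringRule

/-- high-confidence estimation of the cost difference from estimated
optimal payments under two close scoring rules incentivizing `b` and `b'`. -/
theorem cost_difference_estimate
    [Fintype Bi] [Fintype Si] [DecidableEq Si] [Fintype Θ]
    (P : Bi → Si → Θ → ℝ) (c : Bi → ℝ) (M : ℝ) (hM : 0 < M)
    (hP0 : ∀ b s θ, 0 ≤ P b s θ) (hP1 : ∀ b, (∑ s, ∑ θ, P b s θ) = 1)
    (hc : ∀ b, c b ∈ Set.Icc (0:ℝ) 1)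
    (γ γ' : Si → Θ → ℝ)
    (hγ : ∀ s θ, γ s θ ∈ Set.Icc (0:ℝ) M)
    (hγ' : ∀ s θ, γ' s θ ∈ Set.Icc (0:ℝ) M)
    (η : ℝ) (hη : ∀ s θ, |γ s θ - γ' s θ| ≤ η)
    (b b' : Bi)
    (hBR : ∀ b'', Fo P γ b - c b ≥ Fo P γ b'' - c b'')
    (hBR' : ∀ b'', Fo P γ' b' - c b' ≥ Fo P γ' b'' - c b'')
    (V V' ε : ℝ)
    (hV : |V - Fo P γ b| ≤ ε) (hV' : |V' - Fo P γ' b'| ≤ ε) :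
    |(V - V') - (c b - c b')| ≤ 2 * ε + η :=
  cost_difference_estimate_general hP0 hP1 hη hBR hBR' hV hV'
end
end

section
/- Let H ⊆ ℝ be a closed convex set and let G¹, …, Gⁿ be partitions of H, where each Gⁱ = {Gⁱ_1, …, Gⁱ_n} consists of n convex sets. Let P = {P_1, …, P_m} be a partition of H such that each P_j is of the form P_j = ∩_{i∈[n]} Gⁱ_{f(i,j)} for some choice f(i,j) ∈ [n]. Then m ≤ n² − n + 1. -/
/-!
Pick a point in each part of `P`. Walking from one of these points to the next, at least one of the
partitions `Gⁱ` must change its cell, since otherwise the two parts would coincide. Cells are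
intervals, so a cell that has been left is never entered again; hence a partition into `k` cells
changes at most `k - 1` times, and `n` partitions account for at most `n (n - 1)` steps.
-/

open Function Set

section ChangePoints

variable {α κ : Type*}

/-- The positions at which the colouring `c` of an ordered set changes: those `a` which are
covered by a point of another colour. A change is recorded at the last point of the old colour. -/
def changePoints [LT α] (c : α → κ) : Set α :=
  {a | ∃ b, a ⋖ b ∧ c b ≠ c a}

theorem apply_ne_apply_of_mem_changePoints_of_lt [LinearOrder α] {c : α → κ}
    (hc : ∀ k, (c ⁻¹' {k}).OrdConnected) {a b : α} (ha : a ∈ changePoints c) (hab : a < b) :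
    c b ≠ c a := by
  obtain ⟨a', haa', hne⟩ := ha
  exact fun hb => hne ((hc (c a)).out rfl hb ⟨haa'.le, haa'.ge_of_gt hab⟩)

theorem injOn_changePoints [LinearOrder α] {c : α → κ} (hc : ∀ k, (c ⁻¹' {k}).OrdConnected) :
    InjOn c (changePoints c) := by
  intro a ha b hb hab
  by_contra hne
  rcases lt_or_gt_of_ne hne with hlt | hgt
  · exact apply_ne_apply_of_mem_changePoints_of_lt hc ha hlt hab.symm
  · exact apply_ne_apply_of_mem_changePoints_of_lt hc hb hgt hab

theorem ncard_changePoints_le [LinearOrder α] [Finite κ] {c : α → κ}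
    (hc : ∀ k, (c ⁻¹' {k}).OrdConnected) : (changePoints c).ncard ≤ Nat.card κ - 1 := by
  rcases (changePoints c).eq_empty_or_nonempty with hempty | hnonempty
  · simp [hempty]
  have hfin : (changePoints c).Finite :=
    Finite.of_injOn (mapsTo_univ c _) (injOn_changePoints hc) finite_univ
  obtain ⟨a, ⟨b, hab, -⟩, hmax⟩ := exists_max_image _ id hfin hnonempty
  -- All change points lie before `b`, and a colour left at a change point never returns.
  have hmiss : c '' changePoints c ⊆ {c b}ᶜ := by
    rintro _ ⟨a', ha', rfl⟩ heq
    exact apply_ne_apply_of_mem_changePoints_of_lt hc ha' ((hmax a' ha').trans_lt hab.lt) heq.symm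
  calc (changePoints c).ncard = (c '' changePoints c).ncard :=
        (injOn_changePoints hc).ncard_image.symm
    _ ≤ ({c b}ᶜ : Set κ).ncard := ncard_le_ncard hmiss
    _ = Nat.card κ - 1 := by rw [ncard_compl, ncard_singleton]

theorem exists_mem_changePoints_of_not_isMax {ι : Type*} {κ : ι → Type*} [Preorder α]
    [WellFoundedLT α] {c : ∀ i, α → κ i} (hc : Injective fun a i => c i a) {a : α}
    (ha : ¬IsMax a) : ∃ i, a ∈ changePoints (c i) := by
  obtain ⟨b, hab⟩ := exists_covBy_of_wellFoundedLT ha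
  obtain ⟨i, hi⟩ := Function.ne_iff.1 (hc.ne hab.lt.ne')
  exact ⟨i, b, hab, hi⟩

theorem card_le_sum_ncard_changePoints_add_one {ι : Type*} [Fintype ι] {κ : ι → Type*}
    [LinearOrder α] [Finite α] {c : ∀ i, α → κ i} (hc : Injective fun a i => c i a) :
    Nat.card α ≤ ∑ i, (changePoints (c i)).ncard + 1 := by
  have hcover : (univ : Set α) ⊆ (⋃ i, changePoints (c i)) ∪ {a | IsMax a} := by
    intro a _
    by_cases ha : IsMax a
    · exact Or.inr ha
    · exact Or.inl (mem_iUnion.2 (exists_mem_changePoints_of_not_isMax hc ha))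
  have hmax : {a : α | IsMax a}.ncard ≤ 1 :=
    ncard_le_one_iff_subsingleton.2 fun a ha b hb => ha.eq_of_le (hb.isTop a)
  calc Nat.card α = (univ : Set α).ncard := (ncard_univ α).symm
    _ ≤ ((⋃ i, changePoints (c i)) ∪ {a | IsMax a}).ncard := ncard_le_ncard hcover
    _ ≤ (⋃ i, changePoints (c i)).ncard + {a : α | IsMax a}.ncard := ncard_union_le _ _
    _ ≤ ∑ i, (changePoints (c i)).ncard + 1 :=
        add_le_add (ncard_iUnion_le_of_fintype _) hmax

end ChangePoints

section DisjointFamilies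

variable {α κ J : Type*} {G : κ → Set α} {x : J → α} {f : J → κ}

theorem preimage_singleton_eq_preimage_of_pairwise_disjoint (hG : Pairwise (Disjoint on G))
    (hx : ∀ j, x j ∈ G (f j)) (k : κ) : f ⁻¹' {k} = x ⁻¹' G k := by
  ext j
  refine ⟨fun hj => hj ▸ hx j, fun hj => ?_⟩
  exact hG.eq (not_disjoint_iff.2 ⟨x j, hx j, hj⟩)

theorem injective_of_forall_mem_of_pairwise_disjoint {P : J → Set α} (hP : Pairwise (Disjoint on P))
    (hx : ∀ j, x j ∈ P j) : Injective x :=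
  fun a b hab => hP.eq (not_disjoint_iff.2 ⟨x a, hx a, hab ▸ hx b⟩)

end DisjointFamilies

theorem partition_of_intersections_card_bound_general {α ι J : Type*} [LinearOrder α] [Fintype ι]
    {κ : ι → Type*} [∀ i, Finite (κ i)] (G : ∀ i, κ i → Set α)
    (hGconv : ∀ i k, (G i k).OrdConnected) (hGdisj : ∀ i, Pairwise (Disjoint on G i))
    (P : J → Set α) (f : ∀ i, J → κ i) (hP : ∀ j, P j = ⋂ i, G i (f i j))
    (hPne : ∀ j, (P j).Nonempty) (hPdisj : Pairwise (Disjoint on P)) :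
    Finite J ∧ Nat.card J ≤ ∑ i, (Nat.card (κ i) - 1) + 1 := by
  choose x hx using hPne
  have hxG (i : ι) (j : J) : x j ∈ G i (f i j) := mem_iInter.1 (hP j ▸ hx j) i
  have hf : Injective fun j i => f i j := by
    intro a b hab
    have hPab : P a = P b := by simp only [hP, fun i => congrFun hab i]
    exact hPdisj.eq (not_disjoint_iff.2 ⟨x a, hx a, hPab ▸ hx a⟩)
  have hJ : Finite J := Finite.of_injective _ hf
  let : LinearOrder J :=
    LinearOrder.lift' x (injective_of_forall_mem_of_pairwise_disjoint hPdisj hx)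
  have hx_mono : Monotone x := fun _ _ h => h
  have hfconv (i : ι) (k : κ i) : (f i ⁻¹' {k}).OrdConnected := by
    rw [preimage_singleton_eq_preimage_of_pairwise_disjoint (hGdisj i) (hxG i)]
    exact (hGconv i k).preimage_mono hx_mono
  refine ⟨hJ, (card_le_sum_ncard_changePoints_add_one hf).trans ?_⟩
  gcongr with i
  exact ncard_changePoints_le (hfconv i)

/-- if `P` is a partition of a closed convex set `H ⊆ ℝ` each of whose
parts is an intersection of one part from each of `n` partitions of `H` into `n`
convex sets, then `P` has at most `n² − n + 1` parts. -/
theorem partition_of_intersections_card_bound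
    (H : Set ℝ) (hH : IsClosed H) (hHconv : Convex ℝ H)
    (n m : ℕ)
    (G : Fin n → Fin n → Set ℝ)
    (hGconv : ∀ i j, Convex ℝ (G i j))
    (hGne : ∀ i j, (G i j).Nonempty)
    (hGdisj : ∀ i, Pairwise fun j j' => Disjoint (G i j) (G i j'))
    (hGcover : ∀ i, (⋃ j, G i j) = H)
    (P : Fin m → Set ℝ)
    (f : Fin n → Fin m → Fin n)
    (hP : ∀ j, P j = ⋂ i, G i (f i j))
    (hPne : ∀ j, (P j).Nonempty)
    (hPdisj : Pairwise fun j j' => Disjoint (P j) (P j'))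
    (hPcover : (⋃ j, P j) = H) :
    m ≤ n ^ 2 - n + 1 := by
  have hcard := (partition_of_intersections_card_bound_general G
    (fun i j => (hGconv i j).ordConnected) hGdisj P f hP hPne hPdisj).2
  simpa [Nat.mul_sub, sq] using hcard
end

section
/- Suppose |ζ_b[s,θ] − P(s,θ|b)| ≤ ν for all b ∈ B, s ∈ S, θ ∈ Θ, and |Λ_i(b_i,b'_i) − C_i(b_i,b'_i)| ≤ χ for all agents i and b_i, b'_i ∈ B_i. Let (x*, y*, μ*, z*) be an optimal solution to LP(P, C, 0). Then (x*, y*, μ*, z'), where z'_i[b_i,b'_i,s_i] := z*_i[b_i,b'_i,s_i] + M·|S_{−i}|·m·ν (with S_{−i} := ∏_{j≠i} S_j and m = |Θ|), is a feasible solution of LP(ζ, Λ, 2M·|S|·m·ν + χ). -/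
open Finset

noncomputable section

variable {n : ℕ} {B S : Fin n → Type*} {Θ A : Type*}

/-!
For a fixed signal profile and state, the payments to an agent, summed over all action profiles,
total at most `M`: each is at most `M * μ b` and `μ` is a distribution. The map that replaces the
agent's own action `b'ᵢ` by `bᵢ` is injective on the profiles with that action, so `fᵢ` is a sum
over the `|S₋ᵢ| * m` choices of `(s₋ᵢ, θ)` of linear forms in `ζ` whose nonnegative coefficients
total at most `M`. Hence `fᵢ` moves by at most `M * |S₋ᵢ| * m * ν` when `ζ` moves by `ν`. Raising
`zᵢ` by this amount restores (ii); each of the `|Sᵢ|` terms of (i) loses it at most twice, and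
`|Sᵢ| * |S₋ᵢ| = |S|`. Replacing `C` by `Λ` costs (i) at most another `χ`.
-/

section PiSums

variable {ι : Type*} [Fintype ι] [DecidableEq ι] {α : ι → Type*} [∀ i, Fintype (α i)]

theorem sum_filter_update_le_sum [∀ i, DecidableEq (α i)] {R : Type*} [AddCommMonoid R]
    [PartialOrder R] [IsOrderedAddMonoid R] {f : (∀ i, α i) → R} (hf : ∀ v, 0 ≤ f v)
    (i : ι) (a a' : α i) :
    ∑ v with v i = a', f (Function.update v i a) ≤ ∑ v, f v := by
  have hleft : Set.LeftInvOn (fun v : ∀ i, α i ↦ Function.update v i a')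
      (fun v ↦ Function.update v i a) {v | v i = a'} := by
    rintro v rfl
    simp only [Function.update_idem, Function.update_eq_self]
  calc ∑ v with v i = a', f (Function.update v i a)
      = ∑ v ∈ ({v | v i = a'} : Finset _).image (Function.update · i a), f v := by
        rw [sum_image (by simpa only [coe_filter_univ] using hleft.injOn)]
    _ ≤ ∑ v, f v := sum_le_sum_of_subset_of_nonneg (subset_univ _) fun v _ _ ↦ hf v

theorem card_filter_apply_eq [∀ i, DecidableEq (α i)] (i : ι) (a : α i) :
    #{v : ∀ i, α i | v i = a} = ∏ j ∈ univ.erase i, Fintype.card (α j) := by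
  simpa only [Fintype.piFinset_univ, card_univ] using
    Fintype.card_filter_piFinset_eq_of_mem (fun j ↦ (univ : Finset (α j))) i (mem_univ a)

theorem card_mul_prod_erase_card (i : ι) :
    Fintype.card (α i) * ∏ j ∈ univ.erase i, Fintype.card (α j) = Fintype.card (∀ i, α i) := by
  rw [Fintype.card_pi, mul_prod_erase univ (fun j ↦ Fintype.card (α j)) (mem_univ i)]

end PiSums

section WeightedSums

variable {β R : Type*} [Ring R] [LinearOrder R] [IsOrderedRing R]

theorem abs_sum_mul_le_sum_mul {s : Finset β} {w d : β → R} {ν : R}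
    (hw : ∀ b ∈ s, 0 ≤ w b) (hd : ∀ b ∈ s, |d b| ≤ ν) :
    |∑ b ∈ s, w b * d b| ≤ (∑ b ∈ s, w b) * ν := by
  rw [sum_mul]
  refine (abs_sum_le_sum_abs _ _).trans (sum_le_sum fun b hb ↦ ?_)
  rw [abs_mul, abs_of_nonneg (hw b hb)]
  exact mul_le_mul_of_nonneg_left (hd b hb) (hw b hb)

theorem sum_ite_mul_le_add [Fintype β] {μ : β → R} (hμ0 : ∀ b, 0 ≤ μ b)
    (hμ1 : ∑ b, μ b ≤ 1) (p : β → Prop) [DecidablePred p] {t t₀ χ : R} (ht : |t - t₀| ≤ χ) :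
    (∑ b, if p b then μ b * t else 0) ≤ (∑ b, if p b then μ b * t₀ else 0) + χ := by
  have hχ : 0 ≤ χ := (abs_nonneg _).trans ht
  have hmass : ∑ b with p b, μ b ≤ 1 :=
    (sum_le_sum_of_subset_of_nonneg (subset_univ _) fun b _ _ ↦ hμ0 b).trans hμ1
  simp only [← sum_filter, ← sum_mul]
  calc (∑ b with p b, μ b) * t
      ≤ (∑ b with p b, μ b) * (t₀ + χ) :=
        mul_le_mul_of_nonneg_left (sub_le_iff_le_add'.mp (le_of_abs_le ht))
          (sum_nonneg fun b _ ↦ hμ0 b)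
    _ = (∑ b with p b, μ b) * t₀ + (∑ b with p b, μ b) * χ := mul_add _ _ _
    _ ≤ (∑ b with p b, μ b) * t₀ + χ := by grw [mul_le_of_le_one_left hχ hmass]

end WeightedSums

section Perturbation

variable [∀ i, Fintype (B i)] [∀ i, DecidableEq (B i)] [∀ i, Fintype (S i)]
  [∀ i, DecidableEq (S i)] [Fintype Θ] {P ζ : (∀ j, B j) → (∀ j, S j) → Θ → ℝ} {M ν : ℝ}

theorem fLP_eq_sum_filter (i : Fin n) (x : (∀ j, B j) → (∀ j, S j) → Θ → ℝ) (bi bi' : B i)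
    (si si' : S i) (ζ : (∀ j, B j) → (∀ j, S j) → Θ → ℝ) :
    fLP i x bi bi' si si' ζ = ∑ s with s i = si, ∑ θ, ∑ b with b i = bi',
      x (Function.update b i bi) (Function.update s i si') θ * ζ b s θ := by
  simp only [fLP, ite_and, sum_filter]
  rw [sum_comm]
  refine sum_congr rfl fun s _ ↦ ?_
  rw [sum_comm]
  split_ifs with hs <;> simp

theorem abs_fLP_sub_fLP_le (hν0 : 0 ≤ ν) (hν : ∀ b s θ, |ζ b s θ - P b s θ| ≤ ν) (i : Fin n)
    {x : (∀ j, B j) → (∀ j, S j) → Θ → ℝ} (hx0 : ∀ b s θ, 0 ≤ x b s θ)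
    (hxM : ∀ s θ, ∑ b, x b s θ ≤ M) (bi bi' : B i) (si si' : S i) :
    |fLP i x bi bi' si si' ζ - fLP i x bi bi' si si' P| ≤
      M * (∏ j ∈ univ.erase i, (Fintype.card (S j) : ℝ)) * Fintype.card Θ * ν := by
  have hterm (s : ∀ j, S j) (θ : Θ) :
      |∑ b with b i = bi', x (Function.update b i bi) (Function.update s i si') θ *
        (ζ b s θ - P b s θ)| ≤ M * ν :=
    (abs_sum_mul_le_sum_mul (fun _ _ ↦ hx0 _ _ _) fun b _ ↦ hν b s θ).trans <|
      mul_le_mul_of_nonneg_right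
        ((sum_filter_update_le_sum (fun b ↦ hx0 b _ θ) i bi bi').trans (hxM _ θ)) hν0
  simp only [fLP_eq_sum_filter, ← sum_sub_distrib, ← mul_sub]
  calc |∑ s with s i = si, ∑ θ, ∑ b with b i = bi',
          x (Function.update b i bi) (Function.update s i si') θ * (ζ b s θ - P b s θ)|
      ≤ ∑ s : ∀ j, S j with s i = si, ∑ _θ : Θ, M * ν :=
        (abs_sum_le_sum_abs _ _).trans <| sum_le_sum fun s _ ↦
          (abs_sum_le_sum_abs _ _).trans <| sum_le_sum fun θ _ ↦ hterm s θ
    _ = M * (∏ j ∈ univ.erase i, (Fintype.card (S j) : ℝ)) * Fintype.card Θ * ν := by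
        simp only [sum_const, card_univ, card_filter_apply_eq, nsmul_eq_mul, Nat.cast_prod]
        ring

namespace LPfeasible

variable [Fintype A] {Λ Λ₀ : ∀ i, B i → B i → ℝ} {ε χ : ℝ}
  {x : Fin n → (∀ j, B j) → (∀ j, S j) → Θ → ℝ} {y : (∀ j, B j) → (∀ j, S j) → A → ℝ}
  {z : ∀ i, B i → B i → S i → ℝ} {μ : (∀ j, B j) → ℝ}

theorem sum_payment_le (h : LPfeasible M P Λ₀ ε x y z μ) (i : Fin n) (s : ∀ j, S j) (θ : Θ) :
    ∑ b, x i b s θ ≤ M := by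
  obtain ⟨-, -, -, -, hμ1, -, -, -, hxM⟩ := h
  calc ∑ b, x i b s θ ≤ ∑ b, M * μ b := sum_le_sum fun b _ ↦ hxM i b s θ
    _ = M := by rw [← mul_sum, hμ1, mul_one]

theorem of_abs_fLP_sub_le (h : LPfeasible M P Λ₀ ε x y z μ) {δ : Fin n → ℝ} {ε' : ℝ}
    (hδ : ∀ i bi bi' si si',
      |fLP i (x i) bi bi' si si' ζ - fLP i (x i) bi bi' si si' P| ≤ δ i)
    (hχ : ∀ i bi bi', |Λ i bi bi' - Λ₀ i bi bi'| ≤ χ)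
    (hε' : ∀ i, ε + 2 * (Fintype.card (S i) * δ i) + χ ≤ ε') :
    LPfeasible M ζ Λ ε' x y (fun i bi bi' si ↦ z i bi bi' si + δ i) μ := by
  obtain ⟨hx0, hy0, hz0, hμ0, hμ1, hIC, hz, hy, hxM⟩ := h
  refine ⟨hx0, hy0, fun i bi bi' si ↦ ?_, hμ0, hμ1, fun i bi bi' ↦ ?_,
    fun i bi bi' si si' ↦ ?_, hy, hxM⟩
  · exact add_nonneg (hz0 i bi bi' si) ((abs_nonneg _).trans (hδ i bi bi' si si))
  · have hslack : ∑ si, (fLP i (x i) bi bi si si P - z i bi bi' si) -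
          2 * (Fintype.card (S i) * δ i) ≤
        ∑ si, (fLP i (x i) bi bi si si ζ - (z i bi bi' si + δ i)) :=
      calc _ = ∑ si, (fLP i (x i) bi bi si si P - z i bi bi' si - 2 * δ i) := by
            rw [sum_sub_distrib _ fun _ ↦ 2 * δ i, sum_const, card_univ, nsmul_eq_mul,
              mul_left_comm]
        _ ≤ _ := sum_le_sum fun si _ ↦ by linarith [neg_le_of_abs_le (hδ i bi bi si si)]
    have hcost := sum_ite_mul_le_add hμ0 hμ1.le (fun b ↦ b i = bi) (hχ i bi bi')
    linarith [hIC i bi bi', hε' i]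
  · linarith [hz i bi bi' si si', le_of_abs_le (hδ i bi bi' si si')]

end LPfeasible

theorem optimal_LP_solution_feasible_for_estimated_LP_general [Fintype A]
    {Λ Λ₀ : ∀ i, B i → B i → ℝ} {ε χ : ℝ} (hν0 : 0 ≤ ν)
    (hν : ∀ b s θ, |ζ b s θ - P b s θ| ≤ ν)
    (hχ : ∀ i bi bi', |Λ i bi bi' - Λ₀ i bi bi'| ≤ χ)
    {x : Fin n → (∀ j, B j) → (∀ j, S j) → Θ → ℝ} {y : (∀ j, B j) → (∀ j, S j) → A → ℝ}
    {z : ∀ i, B i → B i → S i → ℝ} {μ : (∀ j, B j) → ℝ}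
    (hfeas : LPfeasible M P Λ₀ ε x y z μ) :
    LPfeasible M ζ Λ
      (ε + 2 * M * (Fintype.card (∀ j, S j)) * (Fintype.card Θ) * ν + χ) x y
      (fun i bi bi' si ↦ z i bi bi' si +
        M * (∏ j ∈ univ.erase i, (Fintype.card (S j) : ℝ)) * (Fintype.card Θ) * ν)
      μ := by
  refine hfeas.of_abs_fLP_sub_le
    (fun i ↦ abs_fLP_sub_fLP_le hν0 hν i (hfeas.1 i) (hfeas.sum_payment_le i)) hχ
    fun i ↦ le_of_eq ?_
  rw [← card_mul_prod_erase_card i]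
  push_cast
  ring

end Perturbation

/-- an optimal solution of `LP(P, C, 0)`, with suitably enlarged auxiliary
variables `z`, is feasible for the estimated LP `LP(ζ, Λ, 2M|S|mν + χ)`. -/
theorem optimal_LP_solution_feasible_for_estimated_LP
    [∀ i, Fintype (B i)] [∀ i, DecidableEq (B i)]
    [∀ i, Fintype (S i)] [∀ i, DecidableEq (S i)]
    [Fintype Θ] [Fintype A]
    (c : ∀ i, B i → ℝ)
    (P : (∀ i, B i) → (∀ i, S i) → Θ → ℝ)
    (u : A → Θ → ℝ) (M : ℝ) (hM : 0 < M)
    (hc : ∀ i bi, c i bi ∈ Set.Icc (0:ℝ) 1)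
    (hu : ∀ a θ, u a θ ∈ Set.Icc (0:ℝ) 1)
    (hP0 : ∀ b s θ, 0 ≤ P b s θ)
    (hP1 : ∀ b, (∑ s, ∑ θ, P b s θ) = 1)
    (ζ : (∀ j, B j) → (∀ j, S j) → Θ → ℝ)
    (hζ0 : ∀ b s θ, 0 ≤ ζ b s θ)
    (hζ1 : ∀ b, (∑ s, ∑ θ, ζ b s θ) = 1)
    (Λ : ∀ i, B i → B i → ℝ)
    (hΛrange : ∀ i (bi bi' : B i), Λ i bi bi' ∈ Set.Icc (-1:ℝ) 1)
    (ν χ : ℝ) (hν0 : 0 ≤ ν) (hχ0 : 0 ≤ χ)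
    (hν : ∀ b s θ, |ζ b s θ - P b s θ| ≤ ν)
    (hχ : ∀ i (bi bi' : B i), |Λ i bi bi' - (c i bi - c i bi')| ≤ χ)
    (xs : Fin n → (∀ j, B j) → (∀ j, S j) → Θ → ℝ)
    (ys : (∀ j, B j) → (∀ j, S j) → A → ℝ)
    (zs : ∀ i, B i → B i → S i → ℝ)
    (μs : (∀ j, B j) → ℝ)
    (hfeas : LPfeasible M P (fun i bi bi' => c i bi - c i bi') 0 xs ys zs μs)
    (hopt : ∀ x y z μ,
      LPfeasible M P (fun i bi bi' => c i bi - c i bi') 0 x y z μ →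
      LPobj u P x y ≤ LPobj u P xs ys) :
    LPfeasible M ζ Λ
      (2 * M * (Fintype.card (∀ j, S j)) * (Fintype.card Θ) * ν + χ)
      xs ys
      (fun i bi bi' si => zs i bi bi' si +
        M * (∏ j ∈ Finset.univ.erase i, (Fintype.card (S j) : ℝ)) *
          (Fintype.card Θ) * ν)
      μs := by
  simpa only [zero_add] using
    optimal_LP_solution_feasible_for_estimated_LP_general hν0 hν hχ hfeas
end
end

section
/- Suppose |ζ_b[s,θ] − P(s,θ|b)| ≤ ν for all b, s, θ, and |Λ_i(b_i,b'_i) − C_i(b_i,b'_i)| ≤ χ for all i, b_i, b'_i. Let (x, y, μ, z) be a feasible solution to LP(ζ, Λ, ε) with ε = 2M·|S|·m·ν + χ, and let (μ, γ, π) be the mechanism obtained from it by γ_i[b,s,θ] := x_i[b,s,θ]/μ[b] and π[b,s,a] := y[b,s,a]/μ[b] when μ[b] ≠ 0 (and γ_i := 0, π := uniform when μ[b] = 0). Then for every agent i and every deviation (φ,ψ): F_i(μ,γ) − F_i^{φ,ψ}(μ,γ) ≥ Σ_b μ[b]·C_i(b_i,φ(b_i)) − (2M·|S|·m·(k+1)·ν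 + (k+1)·χ). -/
open Finset

noncomputable section

variable {n : ℕ} {B S : Fin n → Type*} {Θ A : Type*}

/-!
A feasible `x` vanishes wherever `μ` does, so `x = μ γ`, and payments become expressions linear
both in `x` and in the signal distributions. In the program, `z i bᵢ bᵢ' sᵢ` dominates the payment
for every report that follows the signal `sᵢ`. Adding the incentive constraints for the pairs
`(bᵢ, φ bᵢ)` over the `card (B i)` recommendations `bᵢ` therefore gives incentive compatibility
under the estimates `ζ` and `Λ`, up to `card (B i) * ε`. Since `0 ≤ x ≤ M μ`, replacing `ζ` by the
true distributions `P` costs at most `M |S| |Θ| ν`, once for the truthful payment and once for the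
deviation, and replacing `Λ` by the true cost differences costs `χ`.
-/

lemma sum_mul_sub_le_sum_mul {ι R : Type*} [Ring R] [PartialOrder R] [IsOrderedRing R]
    {t : Finset ι} {w f g : ι → R} {δ : R} (hw0 : ∀ j ∈ t, 0 ≤ w j) (hw1 : ∑ j ∈ t, w j = 1)
    (hfg : ∀ j ∈ t, f j - δ ≤ g j) :
    ∑ j ∈ t, w j * f j - δ ≤ ∑ j ∈ t, w j * g j :=
  calc ∑ j ∈ t, w j * f j - δ = ∑ j ∈ t, w j * (f j - δ) := by
        simp only [mul_sub, sum_sub_distrib, ← sum_mul, hw1, one_mul]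
    _ ≤ ∑ j ∈ t, w j * g j :=
        sum_le_sum fun j hj => mul_le_mul_of_nonneg_left (hfg j hj) (hw0 j hj)

lemma sum_ite_apply_eq_sum_ite_update {ι R : Type*} {α : ι → Type*} [DecidableEq ι]
    [Fintype (∀ j, α j)] [AddCommMonoid R] (i : ι) [DecidableEq (α i)] (v w : α i)
    (g : (∀ j, α j) → R) :
    (∑ a, if a i = v then g a else 0) =
      ∑ a, if a i = w then g (Function.update a i v) else 0 := by
  simp only [← sum_filter]
  refine sum_bij' (fun a _ => Function.update a i w) (fun a _ => Function.update a i v)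
    (by simp) (by simp) ?_ ?_ ?_ <;>
  · intro a ha
    obtain rfl := (mem_filter.mp ha).2
    simp

section Transfer

variable [∀ i, Fintype (B i)] [∀ i, Fintype (S i)] [Fintype Θ]

/-- Expected payment of agent `i` under the deviation `(φ, ψ)`, in terms of the payments
`X = μ γ` weighted by the probability of recommendation, as in the linear program; `Q` is the
family of joint distributions of signals and states. Truthful behavior is `φ = id`,
`ψ = fun _ => id`. -/
def devTransfer (X Q : (∀ j, B j) → (∀ j, S j) → Θ → ℝ) (i : Fin n)
    (φ : B i → B i) (ψ : B i → S i → S i) : ℝ :=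
  ∑ b, ∑ s, ∑ θ, X b (Function.update s i (ψ (b i) (s i))) θ *
    Q (Function.update b i (φ (b i))) s θ

lemma FpayDev_eq_devTransfer (P : (∀ j, B j) → (∀ j, S j) → Θ → ℝ) (μ : (∀ j, B j) → ℝ)
    (γ : Fin n → (∀ j, B j) → (∀ j, S j) → Θ → ℝ) (i : Fin n)
    (φ : B i → B i) (ψ : B i → S i → S i) :
    FpayDev P μ γ i φ ψ = devTransfer (fun b s θ => μ b * γ i b s θ) P i φ ψ := by
  simp only [FpayDev, devTransfer, mul_right_comm]

lemma Fpay_eq_devTransfer (P : (∀ j, B j) → (∀ j, S j) → Θ → ℝ) (μ : (∀ j, B j) → ℝ)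
    (γ : Fin n → (∀ j, B j) → (∀ j, S j) → Θ → ℝ) (i : Fin n) :
    Fpay P μ γ i = devTransfer (fun b s θ => μ b * γ i b s θ) P i id (fun _ => id) := by
  simp only [Fpay, devTransfer, id, Function.update_eq_self, mul_right_comm]

lemma abs_devTransfer_sub_devTransfer_le {X Q R : (∀ j, B j) → (∀ j, S j) → Θ → ℝ}
    {w : (∀ j, B j) → ℝ} {ν : ℝ} (hX : ∀ b s θ, |X b s θ| ≤ w b)
    (hQR : ∀ b s θ, |Q b s θ - R b s θ| ≤ ν) (i : Fin n)
    (φ : B i → B i) (ψ : B i → S i → S i) :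
    |devTransfer X Q i φ ψ - devTransfer X R i φ ψ| ≤
      (∑ b, w b) * Fintype.card (∀ j, S j) * Fintype.card Θ * ν := by
  have hterm (b s θ s' b') : |X b s' θ * (Q b' s θ - R b' s θ)| ≤ w b * ν := by
    rw [abs_mul]
    exact mul_le_mul (hX b s' θ) (hQR b' s θ) (abs_nonneg _) ((abs_nonneg _).trans (hX b s' θ))
  calc |devTransfer X Q i φ ψ - devTransfer X R i φ ψ|
      = |∑ b, ∑ s, ∑ θ, X b (Function.update s i (ψ (b i) (s i))) θ *
          (Q (Function.update b i (φ (b i))) s θ - R (Function.update b i (φ (b i))) s θ)| := by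
        simp only [devTransfer, mul_sub, sum_sub_distrib]
    _ ≤ ∑ b, ∑ _s : ∀ j, S j, ∑ _θ : Θ, w b * ν :=
        (abs_sum_le_sum_abs _ _).trans <| sum_le_sum fun b _ =>
          (abs_sum_le_sum_abs _ _).trans <| sum_le_sum fun s _ =>
            (abs_sum_le_sum_abs _ _).trans <| sum_le_sum fun θ _ => hterm b s θ _ _
    _ = (∑ b, w b) * Fintype.card (∀ j, S j) * Fintype.card Θ * ν := by
        simp only [sum_const, card_univ, nsmul_eq_mul, ← mul_sum, ← sum_mul]
        ring

end Transfer

section LinearProgram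

variable [∀ i, Fintype (B i)] [∀ i, DecidableEq (B i)] [∀ i, Fintype (S i)]
  [∀ i, DecidableEq (S i)] [Fintype Θ]

lemma sum_fLP_eq_sum_ite (i : Fin n) (X ζ : (∀ j, B j) → (∀ j, S j) → Θ → ℝ)
    (bi bi' : B i) (σ : S i → S i) :
    ∑ si, fLP i X bi bi' si (σ si) ζ =
      ∑ b, if b i = bi' then ∑ s, ∑ θ,
        X (Function.update b i bi) (Function.update s i (σ (s i))) θ * ζ b s θ else 0 := by
  unfold fLP
  rw [sum_comm]
  refine sum_congr rfl fun b _ => ?_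
  split_ifs with hb
  · rw [sum_comm]
    refine sum_congr rfl fun s _ => ?_
    rw [sum_comm]
    simp [hb]
  · simp [hb]

lemma sum_sum_fLP_eq_devTransfer (i : Fin n) (X ζ : (∀ j, B j) → (∀ j, S j) → Θ → ℝ)
    (φ : B i → B i) (ψ : B i → S i → S i) :
    ∑ bi, ∑ si, fLP i X bi (φ bi) si (ψ bi si) ζ = devTransfer X ζ i φ ψ := by
  have hfiber (bi : B i) : ∑ si, fLP i X bi (φ bi) si (ψ bi si) ζ =
      ∑ b, if b i = bi then ∑ s, ∑ θ, X b (Function.update s i (ψ bi (s i))) θ *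
        ζ (Function.update b i (φ bi)) s θ else 0 := by
    rw [sum_fLP_eq_sum_ite, sum_ite_apply_eq_sum_ite_update i (φ bi) bi]
    refine sum_congr rfl fun b _ => ?_
    split_ifs with hb
    · simp [← hb]
    · rfl
  simp only [hfiber, devTransfer]
  rw [sum_comm]
  simp only [sum_ite_eq, mem_univ, if_true]

namespace LPfeasible

variable [Fintype A] {M ε : ℝ} {ζ : (∀ j, B j) → (∀ j, S j) → Θ → ℝ}
  {Λ : ∀ i, B i → B i → ℝ} {x : Fin n → (∀ j, B j) → (∀ j, S j) → Θ → ℝ}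
  {y : (∀ j, B j) → (∀ j, S j) → A → ℝ} {z : ∀ i, B i → B i → S i → ℝ}
  {μ : (∀ j, B j) → ℝ}

lemma abs_x_le (h : LPfeasible M ζ Λ ε x y z μ) (i : Fin n) (b : ∀ j, B j) (s : ∀ j, S j)
    (θ : Θ) : |x i b s θ| ≤ M * μ b := by
  obtain ⟨hx0, -, -, -, -, -, -, -, hxM⟩ := h
  exact (abs_of_nonneg (hx0 i b s θ)).trans_le (hxM i b s θ)

lemma mul_payment_eq (h : LPfeasible M ζ Λ ε x y z μ)
    {γ : Fin n → (∀ j, B j) → (∀ j, S j) → Θ → ℝ}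
    (hγ : ∀ i b s θ, μ b ≠ 0 → γ i b s θ = x i b s θ / μ b) (i : Fin n) :
    (fun b s θ => μ b * γ i b s θ) = x i := by
  funext b s θ
  by_cases hb : μ b = 0
  · have hx : |x i b s θ| ≤ 0 := by simpa [hb] using h.abs_x_le i b s θ
    rw [hb, zero_mul, abs_nonpos_iff.mp hx]
  · rw [hγ i b s θ hb, mul_div_cancel₀ _ hb]

lemma abs_devTransfer_sub_le (h : LPfeasible M ζ Λ ε x y z μ)
    {P : (∀ j, B j) → (∀ j, S j) → Θ → ℝ} {ν : ℝ}
    (hν : ∀ b s θ, |ζ b s θ - P b s θ| ≤ ν) (i : Fin n)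
    (φ : B i → B i) (ψ : B i → S i → S i) :
    |devTransfer (x i) ζ i φ ψ - devTransfer (x i) P i φ ψ| ≤
      M * Fintype.card (∀ j, S j) * Fintype.card Θ * ν := by
  have hμ1 : ∑ b, μ b = 1 := h.2.2.2.2.1
  simpa only [← mul_sum, hμ1, mul_one] using
    abs_devTransfer_sub_devTransfer_le (h.abs_x_le i) hν i φ ψ

lemma sum_mul_sub_le_devTransfer_sub (h : LPfeasible M ζ Λ ε x y z μ) (i : Fin n)
    (φ : B i → B i) (ψ : B i → S i → S i) :
    ∑ b, μ b * Λ i (b i) (φ (b i)) - Fintype.card (B i) * ε ≤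
      devTransfer (x i) ζ i id (fun _ => id) - devTransfer (x i) ζ i φ ψ := by
  obtain ⟨-, -, -, -, -, hcost, hz, -, -⟩ := h
  calc ∑ b, μ b * Λ i (b i) (φ (b i)) - Fintype.card (B i) * ε
      = ∑ bi, ((∑ b, if b i = bi then μ b * Λ i bi (φ bi) else 0) - ε) := by
        rw [sum_sub_distrib, sum_comm]
        simp
    _ ≤ ∑ bi, ∑ si, (fLP i (x i) bi bi si si ζ - z i bi (φ bi) si) :=
        sum_le_sum fun bi _ => hcost i bi (φ bi)
    _ ≤ ∑ bi, ∑ si, (fLP i (x i) bi bi si si ζ - fLP i (x i) bi (φ bi) si (ψ bi si) ζ) :=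
        sum_le_sum fun bi _ => sum_le_sum fun si _ =>
          sub_le_sub_left (hz i bi (φ bi) si (ψ bi si)) _
    _ = devTransfer (x i) ζ i id (fun _ => id) - devTransfer (x i) ζ i φ ψ := by
        simp only [sum_sub_distrib, ← sum_sum_fLP_eq_devTransfer, id]

end LPfeasible

end LinearProgram

theorem mechanism_from_estimated_LP_approx_IC_general
    [∀ i, Fintype (B i)] [∀ i, DecidableEq (B i)]
    [∀ i, Fintype (S i)] [∀ i, DecidableEq (S i)] [Fintype Θ] [Fintype A]
    {c : ∀ i, B i → ℝ} {P ζ : (∀ j, B j) → (∀ j, S j) → Θ → ℝ}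
    {Λ : ∀ i, B i → B i → ℝ} {M ν χ ε : ℝ}
    (hν : ∀ b s θ, |ζ b s θ - P b s θ| ≤ ν)
    (hχ : ∀ i (bi bi' : B i), |Λ i bi bi' - (c i bi - c i bi')| ≤ χ)
    {x : Fin n → (∀ j, B j) → (∀ j, S j) → Θ → ℝ}
    {y : (∀ j, B j) → (∀ j, S j) → A → ℝ} {z : ∀ i, B i → B i → S i → ℝ}
    {μ : (∀ j, B j) → ℝ} (hfeas : LPfeasible M ζ Λ ε x y z μ)
    {γ : Fin n → (∀ j, B j) → (∀ j, S j) → Θ → ℝ}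
    (hγ : ∀ i b s θ, μ b ≠ 0 → γ i b s θ = x i b s θ / μ b)
    (i : Fin n) (φ : B i → B i) (ψ : B i → S i → S i) :
    Fpay P μ γ i - FpayDev P μ γ i φ ψ ≥
      (∑ b, μ b * (c i (b i) - c i (φ (b i)))) -
        (Fintype.card (B i) * ε +
          2 * M * Fintype.card (∀ j, S j) * Fintype.card Θ * ν + χ) := by
  rw [Fpay_eq_devTransfer, FpayDev_eq_devTransfer, hfeas.mul_payment_eq hγ]
  have htruth := (abs_le.mp (hfeas.abs_devTransfer_sub_le hν i id fun _ => id)).2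
  have hdev := (abs_le.mp (hfeas.abs_devTransfer_sub_le hν i φ ψ)).1
  have hestimated := hfeas.sum_mul_sub_le_devTransfer_sub i φ ψ
  obtain ⟨-, -, -, hμ0, hμ1, -⟩ := hfeas
  have hcost : ∑ b, μ b * (c i (b i) - c i (φ (b i))) - χ ≤ ∑ b, μ b * Λ i (b i) (φ (b i)) :=
    sum_mul_sub_le_sum_mul (fun b _ => hμ0 b) hμ1 fun b _ =>
      sub_le_of_abs_sub_le_left (hχ i (b i) (φ (b i)))
  linarith

/-- the mechanism recovered from a feasible solution of the estimated LP
`LP(ζ, Λ, 2M|S|mν + χ)` is approximately incentive compatible. -/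
theorem mechanism_from_estimated_LP_approx_IC
    [∀ i, Fintype (B i)] [∀ i, DecidableEq (B i)]
    [∀ i, Fintype (S i)] [∀ i, DecidableEq (S i)]
    [Fintype Θ] [Fintype A] [Nonempty A]
    (c : ∀ i, B i → ℝ)
    (P : (∀ i, B i) → (∀ i, S i) → Θ → ℝ)
    (u : A → Θ → ℝ) (M : ℝ) (hM : 0 < M)
    (hc : ∀ i bi, c i bi ∈ Set.Icc (0:ℝ) 1)
    (hu : ∀ a θ, u a θ ∈ Set.Icc (0:ℝ) 1)
    (hP0 : ∀ b s θ, 0 ≤ P b s θ)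
    (hP1 : ∀ b, (∑ s, ∑ θ, P b s θ) = 1)
    (k : ℕ) (hk : ∀ i, Fintype.card (B i) = k)
    (ζ : (∀ j, B j) → (∀ j, S j) → Θ → ℝ)
    (hζ0 : ∀ b s θ, 0 ≤ ζ b s θ)
    (hζ1 : ∀ b, (∑ s, ∑ θ, ζ b s θ) = 1)
    (Λ : ∀ i, B i → B i → ℝ)
    (hΛrange : ∀ i (bi bi' : B i), Λ i bi bi' ∈ Set.Icc (-1:ℝ) 1)
    (ν χ : ℝ) (hν0 : 0 ≤ ν) (hχ0 : 0 ≤ χ)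
    (hν : ∀ b s θ, |ζ b s θ - P b s θ| ≤ ν)
    (hχ : ∀ i (bi bi' : B i), |Λ i bi bi' - (c i bi - c i bi')| ≤ χ)
    (x : Fin n → (∀ j, B j) → (∀ j, S j) → Θ → ℝ)
    (y : (∀ j, B j) → (∀ j, S j) → A → ℝ)
    (z : ∀ i, B i → B i → S i → ℝ)
    (μ : (∀ j, B j) → ℝ)
    (hfeas : LPfeasible M ζ Λ
      (2 * M * (Fintype.card (∀ j, S j)) * (Fintype.card Θ) * ν + χ) x y z μ)
    (γ : Fin n → (∀ j, B j) → (∀ j, S j) → Θ → ℝ)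
    (π : (∀ j, B j) → (∀ j, S j) → A → ℝ)
    (hγ : ∀ i b s θ, γ i b s θ = if μ b = 0 then 0 else x i b s θ / μ b)
    (hπ : ∀ b s a, π b s a =
      if μ b = 0 then (1 : ℝ) / (Fintype.card A) else y b s a / μ b) :
    ∀ (i : Fin n) (φ : B i → B i) (ψ : B i → S i → S i),
      Fpay P μ γ i - FpayDev P μ γ i φ ψ ≥
        (∑ b, μ b * (c i (b i) - c i (φ (b i)))) -
          (2 * M * (Fintype.card (∀ j, S j)) * (Fintype.card Θ) * (k + 1) * ν +
            (k + 1) * χ) := by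
  intro i φ ψ
  linarith [hk i ▸ mechanism_from_estimated_LP_approx_IC_general hν hχ hfeas
    (fun i b s θ hb => (hγ i b s θ).trans (if_neg hb)) i φ ψ]
end
end

section
/- Let Θ be a finite set, let q, ξ, ξ' ∈ Δ(Θ) and ϱ ≥ 0 with |q[θ] − ξ[θ]| ≤ ϱ for all θ ∈ Θ. For any constant H ∈ ℝ define the quadratic scoring payments ĝ[θ] := ξ[θ] + H − (1/2)·||ξ||₂² and ĝ'[θ] := ξ'[θ] + H − (1/2)·||ξ'||₂². Then Σ_θ q[θ]·(ĝ[θ] − ĝ'[θ]) ≥ (1/2)·||ξ − ξ'||₂² − 2ϱ. -/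
open Finset

/-!
Reporting `ξ` under the belief `q` earns, up to a term independent of `ξ`, the expected payment
`-(1/2) ‖q - ξ‖²`. Reporting `ξ` rather than `ξ'` therefore gains
`(1/2) (‖q - ξ'‖² - ‖q - ξ‖²) = (1/2) ‖ξ - ξ'‖² + ⟨q - ξ, ξ - ξ'⟩`, and by Hölder's inequality the
inner product is at least `-‖q - ξ‖_∞ ‖ξ - ξ'‖₁`, where two probability vectors have `ℓ¹` distance
at most `2`.
-/

theorem abs_sum_mul_le_mul_sum_abs {ι R : Type*} [Ring R] [LinearOrder R] [IsOrderedRing R]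
    {s : Finset ι} {f g : ι → R} {c : R} (hf : ∀ i ∈ s, |f i| ≤ c) :
    |∑ i ∈ s, f i * g i| ≤ c * ∑ i ∈ s, |g i| :=
  calc |∑ i ∈ s, f i * g i|
      ≤ ∑ i ∈ s, |f i * g i| := abs_sum_le_sum_abs _ _
    _ = ∑ i ∈ s, |f i| * |g i| := by simp only [abs_mul]
    _ ≤ ∑ i ∈ s, c * |g i| :=
        sum_le_sum fun i hi ↦ mul_le_mul_of_nonneg_right (hf i hi) (abs_nonneg _)
    _ = c * ∑ i ∈ s, |g i| := (mul_sum _ _ _).symm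

theorem sum_abs_sub_le_sum_add_sum {ι G : Type*} [AddCommGroup G] [LinearOrder G]
    [IsOrderedAddMonoid G] {s : Finset ι} {f g : ι → G}
    (hf : ∀ i ∈ s, 0 ≤ f i) (hg : ∀ i ∈ s, 0 ≤ g i) :
    ∑ i ∈ s, |f i - g i| ≤ ∑ i ∈ s, f i + ∑ i ∈ s, g i :=
  calc ∑ i ∈ s, |f i - g i|
      ≤ ∑ i ∈ s, (|f i| + |g i|) := sum_le_sum fun _ _ ↦ abs_sub _ _
    _ = ∑ i ∈ s, (f i + g i) :=
        sum_congr rfl fun i hi ↦ by rw [abs_of_nonneg (hf i hi), abs_of_nonneg (hg i hi)]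
    _ = ∑ i ∈ s, f i + ∑ i ∈ s, g i := sum_add_distrib

theorem sum_sub_sq_sub_sum_sub_sq {ι R : Type*} [CommRing R] (s : Finset ι) (f g h : ι → R) :
    ∑ i ∈ s, (f i - h i) ^ 2 - ∑ i ∈ s, (f i - g i) ^ 2 =
      ∑ i ∈ s, (g i - h i) ^ 2 + 2 * ∑ i ∈ s, (f i - g i) * (g i - h i) := by
  rw [← sum_sub_distrib, mul_sum, ← sum_add_distrib]
  exact sum_congr rfl fun i _ ↦ by ring

section QuadraticScore

variable {Θ K : Type*} [Fintype Θ] [Field K]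

/-- The quadratic (Brier) scoring rule: the payment in state `θ` for the report `ξ`, shifted by the
constant `H`. Reports are arbitrary vectors, not only probability vectors. -/
def quadraticScore (H : K) (ξ : Θ → K) (θ : Θ) : K :=
  ξ θ + H - (1/2) * ∑ θ', (ξ θ') ^ 2

theorem sum_mul_quadraticScore [NeZero (2 : K)] {q : Θ → K} (hq : ∑ θ, q θ = 1)
    (H : K) (ξ : Θ → K) :
    ∑ θ, q θ * quadraticScore H ξ θ =
      H + (1/2) * ∑ θ, (q θ) ^ 2 - (1/2) * ∑ θ, (q θ - ξ θ) ^ 2 := by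
  have expected_payment : ∑ θ, q θ * quadraticScore H ξ θ =
      ∑ θ, q θ * ξ θ + H - (1/2) * ∑ θ, (ξ θ) ^ 2 := by
    simp only [quadraticScore, mul_sub, mul_add, sum_sub_distrib, sum_add_distrib, ← sum_mul, hq,
      one_mul]
  have sum_sq_expand : ∑ θ, (q θ - ξ θ) ^ 2 =
      ∑ θ, (q θ) ^ 2 - 2 * ∑ θ, q θ * ξ θ + ∑ θ, (ξ θ) ^ 2 := by
    simp only [sub_sq, sum_add_distrib, sum_sub_distrib, mul_sum, mul_assoc]
  rw [expected_payment, sum_sq_expand]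
  field_simp
  ring

theorem sum_mul_quadraticScore_sub [NeZero (2 : K)] {q : Θ → K} (hq : ∑ θ, q θ = 1)
    (H : K) (ξ ξ' : Θ → K) :
    ∑ θ, q θ * (quadraticScore H ξ θ - quadraticScore H ξ' θ) =
      (1/2) * ∑ θ, (ξ θ - ξ' θ) ^ 2 + ∑ θ, (q θ - ξ θ) * (ξ θ - ξ' θ) :=
  calc ∑ θ, q θ * (quadraticScore H ξ θ - quadraticScore H ξ' θ)
      = (1/2) * (∑ θ, (q θ - ξ' θ) ^ 2 - ∑ θ, (q θ - ξ θ) ^ 2) := by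
        simp only [mul_sub (q _), sum_sub_distrib, sum_mul_quadraticScore hq]
        ring
    _ = (1/2) * ∑ θ, (ξ θ - ξ' θ) ^ 2 + ∑ θ, (q θ - ξ θ) * (ξ θ - ξ' θ) := by
        rw [sum_sub_sq_sub_sum_sub_sq]
        field_simp

theorem quadratic_scoring_separation_general [LinearOrder K] [IsStrictOrderedRing K]
    {q ξ : Θ → K} (ξ' : Θ → K) (hq : ∑ θ, q θ = 1) {ϱ : K} (hclose : ∀ θ, |q θ - ξ θ| ≤ ϱ)
    (H : K) :
    (1/2) * ∑ θ, (ξ θ - ξ' θ) ^ 2 - ϱ * ∑ θ, |ξ θ - ξ' θ| ≤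
      ∑ θ, q θ * (quadraticScore H ξ θ - quadraticScore H ξ' θ) := by
  have holder_bound : |∑ θ, (q θ - ξ θ) * (ξ θ - ξ' θ)| ≤ ϱ * ∑ θ, |ξ θ - ξ' θ| :=
    abs_sum_mul_le_mul_sum_abs fun θ _ ↦ hclose θ
  rw [sum_mul_quadraticScore_sub hq]
  linarith [neg_le_of_abs_le holder_bound]

end QuadraticScore

/-- quadratic scoring payments built from an estimated posterior `ξ`
that is `ϱ`-close to the true posterior `q` separate `ξ` from any other estimated
posterior `ξ'` up to `2ϱ`. -/
theorem quadratic_scoring_separation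
    {Θ : Type*} [Fintype Θ]
    (q ξ ξ' : Θ → ℝ)
    (hq0 : ∀ θ, 0 ≤ q θ) (hq1 : (∑ θ, q θ) = 1)
    (hξ0 : ∀ θ, 0 ≤ ξ θ) (hξ1 : (∑ θ, ξ θ) = 1)
    (hξ'0 : ∀ θ, 0 ≤ ξ' θ) (hξ'1 : (∑ θ, ξ' θ) = 1)
    (ϱ : ℝ) (hϱ0 : 0 ≤ ϱ)
    (hclose : ∀ θ, |q θ - ξ θ| ≤ ϱ)
    (H : ℝ) :
    ∑ θ, q θ *
        ((ξ θ + H - (1/2) * ∑ θ', (ξ θ')^2) - (ξ' θ + H - (1/2) * ∑ θ', (ξ' θ')^2)) ≥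
      (1/2) * (∑ θ, (ξ θ - ξ' θ)^2) - 2 * ϱ := by
  have sum_abs_le_two : ∑ θ, |ξ θ - ξ' θ| ≤ 2 := by
    linarith [sum_abs_sub_le_sum_add_sum (fun θ (_ : θ ∈ univ) ↦ hξ0 θ) (fun θ _ ↦ hξ'0 θ)]
  refine le_trans ?_ (quadratic_scoring_separation_general ξ' hq1 hclose H)
  linarith [mul_le_mul_of_nonneg_left sum_abs_le_two hϱ0]
end
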